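/- There exists a constant C_p > 0 depending only on p such that, whenever N_n ≤ 1, for all t1, t2 ≥ 0 with t1 ≤ 1, t2 ≤ 1 and t1 + t2 ≤ 1, and all x ≤ 0, P( S_n ≤ x · √( t1·⟨S⟩_n + t2·[S]_n + (1 − t1 − t2) ) ) − Φ(x) ≥ −C_p · N_n^{1/(2p+1)}. -/

import Mathlib

open MeasureTheory Filter Finset

/-- The standard normal distribution function
`Φ(x) = (2π)^{-1/2} ∫_{-∞}^x e^{-u²/2} du`. -/
noncomputable def stdNormalCDF (x : ℝ) : ℝ :=
  ∫ u in Set.Iic x, (Real.sqrt (2 * Real.pi))⁻¹ * Real.exp (-u ^ 2 / 2)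

/-!
The lower bound for `P(Sₙ ≤ xV)` follows from a uniform normal approximation of `Sₙ` itself: for
`x ≤ 0` the event `Sₙ ≤ xV` contains `Sₙ ≤ (1 + 5ε)x` unless the mixed normaliser `V²` is large,
so that only upper tails of `⟨S⟩ₙ` and `[S]ₙ` matter. Take `ε = N^{1/(2p+1)}`. Markov's inequality
handles `⟨S⟩ₙ`, and an exponential supermartingale built from the truncated squares shows that
`[S]ₙ` exceeds `1 + 5ε` only with probability `O(ε)`.

The normal approximation is Lindeberg's telescoping along the martingale, with a Gaussian smoothing
whose variance is traded for conditional variance and never drops below `ε²`; to this end the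
martingale is killed once its conditional variance exceeds `1 + ηε²`. The Taylor remainders
add up to the mean of a decaying kernel at `Sₙ`, which is at most a small multiple of the
Kolmogorov distance itself plus `O(ε)`, and the multiple is absorbed.
-/

open ProbabilityTheory (gaussianPDFReal gaussianReal gaussianPDFReal_nonneg)

local notation "φ" => gaussianPDFReal 0 1
local notation "Φ" => stdNormalCDF

/-! ### The standard normal distribution -/

lemma gaussianPDFReal_zero_one (u : ℝ) :
    φ u = (√(2 * Real.pi))⁻¹ * Real.exp (-u ^ 2 / 2) := by
  simp [gaussianPDFReal]

lemma continuous_gaussianPDFReal_zero_one : Continuous φ := by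
  simp only [funext gaussianPDFReal_zero_one]
  fun_prop

lemma gaussianPDFReal_zero_one_le_exp (u : ℝ) : φ u ≤ Real.exp (-u ^ 2 / 2) := by
  rw [gaussianPDFReal_zero_one]
  refine mul_le_of_le_one_left (Real.exp_pos _).le (inv_le_one_of_one_le₀ ?_)
  exact Real.one_le_sqrt.2 (by linarith [Real.pi_gt_three])

lemma gaussianPDFReal_zero_one_le_one (u : ℝ) : φ u ≤ 1 :=
  (gaussianPDFReal_zero_one_le_exp u).trans (Real.exp_le_one_iff.2 (by nlinarith [sq_nonneg u]))

lemma abs_mul_gaussianPDFReal_le_one (u : ℝ) : |u * φ u| ≤ 1 := by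
  have hexp : |u| ≤ Real.exp (u ^ 2 / 2) := by
    nlinarith [Real.add_one_le_exp (u ^ 2 / 2), sq_abs u, sq_nonneg (|u| - 1)]
  calc |u * φ u| = |u| * φ u := by rw [abs_mul, abs_of_nonneg (gaussianPDFReal_nonneg ..)]
    _ ≤ Real.exp (u ^ 2 / 2) * Real.exp (-u ^ 2 / 2) :=
      mul_le_mul hexp (gaussianPDFReal_zero_one_le_exp u) (gaussianPDFReal_nonneg ..)
        (Real.exp_pos _).le
    _ = 1 := by rw [← Real.exp_add]; simp [neg_div]

lemma exp_neg_sq_div_two_le (u : ℝ) : Real.exp (-u ^ 2 / 2) ≤ 2 ^ 12 / (1 + u ^ 2) ^ 4 := by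
  have hlin : (1 + u ^ 2) / 8 ≤ Real.exp (u ^ 2 / 8) := by
    linarith [Real.add_one_le_exp (u ^ 2 / 8)]
  have hpow : ((1 + u ^ 2) / 8) ^ 4 ≤ Real.exp (u ^ 2 / 2) := by
    calc ((1 + u ^ 2) / 8) ^ 4 ≤ Real.exp (u ^ 2 / 8) ^ 4 := by gcongr
      _ = Real.exp (u ^ 2 / 2) := by rw [← Real.exp_nat_mul]; congr 1; push_cast; ring
  rw [neg_div, Real.exp_neg, inv_le_comm₀ (Real.exp_pos _) (by positivity)]
  exact (le_of_eq (by rw [inv_div]; ring)).trans hpow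

lemma one_add_abs_pow_mul_gaussianPDFReal_le (u : ℝ) :
    (1 + |u|) ^ 3 * φ u ≤ 2 ^ 15 / (1 + u ^ 2) := by
  have hpoly : 1 + |u| ≤ 2 * (1 + u ^ 2) := by
    nlinarith [sq_abs u, sq_nonneg (|u| - 1)]
  calc (1 + |u|) ^ 3 * φ u ≤ (2 * (1 + u ^ 2)) ^ 3 * (2 ^ 12 / (1 + u ^ 2) ^ 4) :=
        mul_le_mul (by gcongr)
          ((gaussianPDFReal_zero_one_le_exp u).trans (exp_neg_sq_div_two_le u))
          (gaussianPDFReal_nonneg ..) (by positivity)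
    _ = 2 ^ 15 / (1 + u ^ 2) := by field_simp

lemma stdNormalCDF_eq_measureReal (x : ℝ) : Φ x = (gaussianReal 0 1).real (Set.Iic x) := by
  have hint : 0 ≤ ∫ u in Set.Iic x, φ u := integral_nonneg (gaussianPDFReal_nonneg 0 1)
  rw [Measure.real, ProbabilityTheory.gaussianReal_apply_eq_integral 0 one_ne_zero,
    ENNReal.toReal_ofReal hint]
  simp only [gaussianPDFReal_zero_one, stdNormalCDF]

lemma stdNormalCDF_nonneg (x : ℝ) : 0 ≤ Φ x :=
  stdNormalCDF_eq_measureReal x ▸ measureReal_nonneg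

lemma stdNormalCDF_le_one (x : ℝ) : Φ x ≤ 1 :=
  stdNormalCDF_eq_measureReal x ▸ measureReal_le_one

lemma abs_stdNormalCDF_sub_le_one (x y : ℝ) : |Φ x - Φ y| ≤ 1 :=
  abs_sub_le_of_le_of_le (stdNormalCDF_nonneg x) (stdNormalCDF_le_one x) (stdNormalCDF_nonneg y)
    (stdNormalCDF_le_one y) |>.trans_eq (sub_zero 1)

lemma hasDerivAt_stdNormalCDF (x : ℝ) : HasDerivAt Φ (φ x) x := by
  have hint : Integrable φ := ProbabilityTheory.integrable_gaussianPDFReal 0 1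
  have hΦ : Φ = fun x ↦ Φ 0 + ∫ u in (0 : ℝ)..x, φ u := by
    ext x
    rw [← intervalIntegral.integral_Iic_sub_Iic hint.integrableOn hint.integrableOn]
    simp only [stdNormalCDF, gaussianPDFReal_zero_one, add_sub_cancel]
  rw [hΦ]
  have hcont := continuous_gaussianPDFReal_zero_one
  exact (intervalIntegral.integral_hasDerivAt_right (hcont.intervalIntegrable ..)
    (hcont.stronglyMeasurableAtFilter ..) hcont.continuousAt).const_add _

lemma continuous_stdNormalCDF : Continuous Φ :=
  continuous_iff_continuousAt.2 fun x ↦ (hasDerivAt_stdNormalCDF x).continuousAt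

lemma hasDerivAt_gaussianPDFReal_zero_one (x : ℝ) : HasDerivAt φ (-(x * φ x)) x := by
  simp only [funext gaussianPDFReal_zero_one]
  have hexponent : HasDerivAt (fun u : ℝ ↦ -u ^ 2 / 2) (-x) x :=
    (((hasDerivAt_id' x).pow 2).neg.div_const 2).congr_deriv (by simp; ring)
  exact (hexponent.exp.const_mul (√(2 * Real.pi))⁻¹).congr_deriv (by ring)

lemma abs_stdNormalCDF_sub_le (a b : ℝ) : |Φ b - Φ a| ≤ |b - a| := by
  have h := convex_univ.norm_image_sub_le_of_norm_hasDerivWithin_le (C := 1)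
    (fun x _ ↦ (hasDerivAt_stdNormalCDF x).hasDerivWithinAt)
    (fun x _ ↦ (abs_of_nonneg (gaussianPDFReal_nonneg 0 1 x)).trans_le
      (gaussianPDFReal_zero_one_le_one x))
    (Set.mem_univ a) (Set.mem_univ b)
  simpa using h

lemma abs_stdNormalCDF_mul_sub_le (y : ℝ) {c : ℝ} (hc : 1 ≤ c) :
    |Φ (c * y) - Φ y| ≤ c - 1 := by
  have hderiv (t : ℝ) : HasDerivAt (fun t ↦ Φ (t * y)) (φ (t * y) * y) t :=
    (hasDerivAt_stdNormalCDF (t * y)).comp (h := fun t ↦ t * y) t (hasDerivAt_mul_const y)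
  have hbound (t : ℝ) (ht : t ∈ Set.Icc 1 c) : ‖φ (t * y) * y‖ ≤ 1 := by
    calc |φ (t * y) * y| ≤ t * |φ (t * y) * y| := le_mul_of_one_le_left (abs_nonneg _) ht.1
      _ = |t * y * φ (t * y)| := by
        rw [← abs_of_pos (one_pos.trans_le ht.1), ← abs_mul, abs_of_pos (one_pos.trans_le ht.1)]
        ring_nf
      _ ≤ 1 := abs_mul_gaussianPDFReal_le_one _
  have h := (convex_Icc 1 c).norm_image_sub_le_of_norm_hasDerivWithin_le
    (fun t _ ↦ (hderiv t).hasDerivWithinAt) hbound ⟨le_rfl, hc⟩ ⟨hc, le_rfl⟩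
  simpa [abs_of_nonneg (sub_nonneg.2 hc)] using h

/-! ### Taylor expansions in time and space -/

section Taylor

variable {E : Type*} [NormedAddCommGroup E] [NormedSpace ℝ E] {a b M : ℝ}

lemma norm_taylor_one_remainder_le {f f' f'' : ℝ → E}
    (hf : ∀ x ∈ Set.uIcc a b, HasDerivAt f (f' x) x)
    (hf' : ∀ x ∈ Set.uIcc a b, HasDerivAt f' (f'' x) x)
    (hM : ∀ x ∈ Set.uIcc a b, ‖f'' x‖ ≤ M) :
    ‖f b - f a - (b - a) • f' a‖ ≤ M * |b - a| ^ 2 := by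
  have hM0 : 0 ≤ M := (norm_nonneg _).trans (hM a Set.left_mem_uIcc)
  have hincr : ∀ x ∈ Set.uIcc a b, ‖f' x - f' a‖ ≤ M * |b - a| := fun x hx ↦ by
    refine ((convex_uIcc a b).norm_image_sub_le_of_norm_hasDerivWithin_le
      (fun x hx ↦ (hf' x hx).hasDerivWithinAt) hM Set.left_mem_uIcc hx).trans ?_
    exact mul_le_mul_of_nonneg_left (Set.abs_sub_left_of_mem_uIcc hx) hM0
  have hderiv : ∀ x ∈ Set.uIcc a b,
      HasDerivWithinAt (fun x ↦ f x - x • f' a) (f' x - f' a) (Set.uIcc a b) x := fun x hx ↦ by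
    exact (((hf x hx).sub ((hasDerivAt_id' x).smul_const (f' a))).congr_deriv
      (by rw [one_smul])).hasDerivWithinAt
  calc ‖f b - f a - (b - a) • f' a‖ = ‖(f b - b • f' a) - (f a - a • f' a)‖ := by
        congr 1; rw [sub_smul]; abel
    _ ≤ M * |b - a| * ‖b - a‖ := (convex_uIcc a b).norm_image_sub_le_of_norm_hasDerivWithin_le
        hderiv hincr Set.left_mem_uIcc Set.right_mem_uIcc
    _ = M * |b - a| ^ 2 := by rw [Real.norm_eq_abs]; ring

lemma norm_taylor_two_remainder_le {f f' f'' f''' : ℝ → E}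
    (hf : ∀ x ∈ Set.uIcc a b, HasDerivAt f (f' x) x)
    (hf' : ∀ x ∈ Set.uIcc a b, HasDerivAt f' (f'' x) x)
    (hf'' : ∀ x ∈ Set.uIcc a b, HasDerivAt f'' (f''' x) x)
    (hM : ∀ x ∈ Set.uIcc a b, ‖f''' x‖ ≤ M) :
    ‖f b - f a - (b - a) • f' a - ((b - a) ^ 2 / 2) • f'' a‖ ≤ M * |b - a| ^ 3 := by
  have hM0 : 0 ≤ M := (norm_nonneg _).trans (hM a Set.left_mem_uIcc)
  have hincr : ∀ x ∈ Set.uIcc a b, ‖f'' x - f'' a‖ ≤ M * |b - a| := fun x hx ↦ by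
    refine ((convex_uIcc a b).norm_image_sub_le_of_norm_hasDerivWithin_le
      (fun x hx ↦ (hf'' x hx).hasDerivWithinAt) hM Set.left_mem_uIcc hx).trans ?_
    exact mul_le_mul_of_nonneg_left (Set.abs_sub_left_of_mem_uIcc hx) hM0
  have hsub (x : ℝ) : HasDerivAt (fun x ↦ x - a) 1 x := (hasDerivAt_id x).sub_const a
  have hquad (x : ℝ) : HasDerivAt (fun x ↦ (x - a) ^ 2 / 2) (x - a) x :=
    (((hsub x).pow 2).div_const 2).congr_deriv (by simp)
  have h := norm_taylor_one_remainder_le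
    (fun x hx ↦ (hf x hx).sub ((hquad x).smul_const (f'' a)))
    (fun x hx ↦ (hf' x hx).sub ((hsub x).smul_const (f'' a)))
    (fun x hx ↦ by simpa using hincr x hx)
  calc _ = ‖f b - ((b - a) ^ 2 / 2) • f'' a - (f a - ((a - a) ^ 2 / 2) • f'' a)
          - (b - a) • (f' a - (a - a) • f'' a)‖ := by congr 1; simp; abel
    _ ≤ M * |b - a| * |b - a| ^ 2 := h
    _ = M * |b - a| ^ 3 := by ring

end Taylor

lemma abs_stdNormalCDF_add_taylor_le (u : ℝ) {ξ : ℝ} (hξ : |ξ| ≤ 1) :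
    |Φ (u + ξ) - Φ u - φ u * ξ + u * φ u / 2 * ξ ^ 2| ≤ 2 ^ 17 / (1 + u ^ 2) * |ξ| ^ 3 := by
  have hφ' (t : ℝ) : HasDerivAt (fun x ↦ -(x * φ x)) ((t ^ 2 - 1) * φ t) t :=
    ((hasDerivAt_id' t).mul (hasDerivAt_gaussianPDFReal_zero_one t)).neg.congr_deriv (by simp; ring)
  have hbound : ∀ t ∈ Set.uIcc u (u + ξ), ‖(t ^ 2 - 1) * φ t‖ ≤ 2 ^ 17 / (1 + u ^ 2) := by
    intro t ht
    have htu : |t - u| ≤ 1 := by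
      simpa using (Set.abs_sub_left_of_mem_uIcc ht).trans (by simpa using hξ)
    have hweight : 1 + u ^ 2 ≤ 4 * (1 + t ^ 2) := by
      nlinarith [sq_nonneg (2 * t - u), sq_nonneg t, abs_le.1 htu]
    have hpoly : |t ^ 2 - 1| ≤ (1 + |t|) ^ 3 := by
      have ht0 := abs_nonneg t
      have : |t ^ 2 - 1| ≤ |t| ^ 2 + 1 := by
        rw [sq_abs, abs_le]; constructor <;> nlinarith [sq_nonneg t]
      nlinarith [pow_nonneg ht0 3, pow_nonneg ht0 2]
    calc |(t ^ 2 - 1) * φ t| = |t ^ 2 - 1| * φ t := by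
          rw [abs_mul, abs_of_nonneg (gaussianPDFReal_nonneg ..)]
      _ ≤ (1 + |t|) ^ 3 * φ t := mul_le_mul_of_nonneg_right hpoly (gaussianPDFReal_nonneg ..)
      _ ≤ 2 ^ 15 / (1 + t ^ 2) := one_add_abs_pow_mul_gaussianPDFReal_le t
      _ ≤ 2 ^ 17 / (1 + u ^ 2) := by
        rw [div_le_div_iff₀ (by positivity) (by positivity)]; linarith
  have h := norm_taylor_two_remainder_le (fun t _ ↦ hasDerivAt_stdNormalCDF t)
    (fun t _ ↦ hasDerivAt_gaussianPDFReal_zero_one t) (fun t _ ↦ hφ' t) hbound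
  simp only [add_sub_cancel_left, smul_eq_mul, Real.norm_eq_abs] at h
  convert h using 2
  ring

lemma abs_stdNormalCDF_add_taylor_le_sq (u : ℝ) {ξ : ℝ} (hξ : 1 ≤ |ξ|) :
    |Φ (u + ξ) - Φ u - φ u * ξ + u * φ u / 2 * ξ ^ 2| ≤ 3 * ξ ^ 2 := by
  have hlin : |φ u * ξ| ≤ |ξ| := by
    rw [abs_mul, abs_of_nonneg (gaussianPDFReal_nonneg ..)]
    exact mul_le_of_le_one_left (abs_nonneg _) (gaussianPDFReal_zero_one_le_one u)
  have hquad : |u * φ u / 2 * ξ ^ 2| ≤ ξ ^ 2 := by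
    rw [abs_mul, abs_div, abs_two, abs_of_nonneg (sq_nonneg ξ)]
    exact mul_le_of_le_one_left (sq_nonneg _) (by linarith [abs_mul_gaussianPDFReal_le_one u])
  calc _ ≤ |Φ (u + ξ) - Φ u| + |φ u * ξ| + |u * φ u / 2 * ξ ^ 2| :=
        (abs_add_le _ _).trans (by gcongr; exact abs_sub _ _)
    _ ≤ 3 * ξ ^ 2 := by
      nlinarith [sq_abs ξ, abs_stdNormalCDF_sub_le_one (u + ξ) u]

section Time

variable (u : ℝ) {t τ : ℝ}

lemma hasDerivAt_div_sqrt_one_add (ht : 0 ≤ t) :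
    HasDerivAt (fun t ↦ u / √(1 + t)) (-(u / √(1 + t)) / (2 * (1 + t))) t := by
  have hsqrt := ((hasDerivAt_id' t).const_add 1).sqrt (by positivity)
  refine ((hasDerivAt_const t u).div hsqrt (by positivity)).congr_deriv ?_
  rw [Real.sq_sqrt (by positivity)]
  field_simp
  ring

lemma hasDerivAt_stdNormalCDF_div_sqrt (ht : 0 ≤ t) :
    HasDerivAt (fun t ↦ Φ (u / √(1 + t)))
      (-(φ (u / √(1 + t)) * (u / √(1 + t)) / (2 * (1 + t)))) t :=
  ((hasDerivAt_stdNormalCDF _).comp t (hasDerivAt_div_sqrt_one_add u ht)).congr_deriv (by ring)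

lemma hasDerivAt_deriv_stdNormalCDF_div_sqrt (ht : 0 ≤ t) :
    HasDerivAt (fun t ↦ -(φ (u / √(1 + t)) * (u / √(1 + t)) / (2 * (1 + t))))
      (u / √(1 + t) * (3 - (u / √(1 + t)) ^ 2) / 4 * (φ (u / √(1 + t)) / (1 + t) ^ 2)) t := by
  have harg := hasDerivAt_div_sqrt_one_add u ht
  have hden : HasDerivAt (fun t : ℝ ↦ 2 * (1 + t)) 2 t := by
    simpa using ((hasDerivAt_id t).const_add 1).const_mul 2
  have hφ := (hasDerivAt_gaussianPDFReal_zero_one _).comp t harg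
  refine ((hφ.mul harg).div hden (by positivity)).neg.congr_deriv ?_
  simp only [Function.comp, Pi.mul_apply]
  generalize u / √(1 + t) = m
  field_simp
  ring

lemma one_add_abs_pow_mul_gaussianPDFReal_div_sqrt_le (ht : t ∈ Set.Icc 0 1) :
    (1 + |u / √(1 + t)|) ^ 3 * φ (u / √(1 + t)) ≤ 2 ^ 17 / (1 + u ^ 2) := by
  have ht0 := ht.1
  have hsq : u ^ 2 / 2 ≤ u ^ 2 / (1 + t) := by gcongr; linarith [ht.2]
  refine (one_add_abs_pow_mul_gaussianPDFReal_le _).trans ?_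
  rw [div_pow, Real.sq_sqrt (by positivity), div_le_div_iff₀ (by positivity) (by positivity)]
  nlinarith [sq_nonneg u]

lemma abs_stdNormalCDF_div_sqrt_taylor_le (hτ : τ ∈ Set.Icc 0 1) :
    |Φ (u / √(1 + τ)) - Φ u + u * φ u / 2 * τ| ≤ 2 ^ 17 / (1 + u ^ 2) * τ ^ 2 := by
  have hmem {t : ℝ} (ht : t ∈ Set.uIcc 0 τ) : t ∈ Set.Icc 0 1 :=
    Set.Icc_subset_Icc_right hτ.2 (Set.uIcc_of_le hτ.1 ▸ ht)
  have hbound : ∀ t ∈ Set.uIcc 0 τ, ‖u / √(1 + t) * (3 - (u / √(1 + t)) ^ 2) / 4 *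
      (φ (u / √(1 + t)) / (1 + t) ^ 2)‖ ≤ 2 ^ 17 / (1 + u ^ 2) := by
    intro t ht
    refine le_trans ?_ (one_add_abs_pow_mul_gaussianPDFReal_div_sqrt_le u (hmem ht))
    generalize u / √(1 + t) = m
    have hφ := gaussianPDFReal_nonneg 0 1 m
    have ht0 := (hmem ht).1
    have hm := abs_nonneg m
    rw [norm_mul, Real.norm_of_nonneg (by positivity : 0 ≤ φ m / (1 + t) ^ 2), Real.norm_eq_abs]
    refine mul_le_mul ?_ (div_le_self hφ (one_le_pow₀ (by linarith))) (by positivity)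
      (by positivity)
    have : |3 - m ^ 2| ≤ 3 + |m| ^ 2 := by
      rw [sq_abs, abs_le]; constructor <;> nlinarith [sq_nonneg m]
    rw [abs_div, abs_mul, abs_of_pos (by norm_num : (0 : ℝ) < 4), div_le_iff₀ (by norm_num)]
    nlinarith [mul_le_mul_of_nonneg_left this hm, pow_nonneg hm 3, pow_nonneg hm 2]
  have h := norm_taylor_one_remainder_le
    (fun t ht ↦ hasDerivAt_stdNormalCDF_div_sqrt u (hmem ht).1)
    (fun t ht ↦ hasDerivAt_deriv_stdNormalCDF_div_sqrt u (hmem ht).1) hbound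
  simp only [add_zero, Real.sqrt_one, div_one, sub_zero, mul_one, smul_eq_mul, sq_abs,
    Real.norm_eq_abs] at h
  convert h using 2
  ring

lemma abs_stdNormalCDF_div_sqrt_sub_le (hτ : τ ∈ Set.Icc 0 1) :
    |Φ (u / √(1 + τ)) - Φ u| ≤ 2 ^ 17 / (1 + u ^ 2) * τ := by
  have hbound : ∀ t ∈ Set.Icc 0 τ,
      ‖-(φ (u / √(1 + t)) * (u / √(1 + t)) / (2 * (1 + t)))‖ ≤ 2 ^ 17 / (1 + u ^ 2) := by
    intro t ht
    have ht' := Set.Icc_subset_Icc_right hτ.2 ht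
    refine le_trans ?_ (one_add_abs_pow_mul_gaussianPDFReal_div_sqrt_le u ht')
    generalize u / √(1 + t) = m
    have hφ := gaussianPDFReal_nonneg 0 1 m
    have hm := abs_nonneg m
    rw [norm_neg, norm_div, norm_mul, Real.norm_of_nonneg hφ, Real.norm_eq_abs, mul_comm,
      Real.norm_of_nonneg (by linarith [ht.1])]
    refine (div_le_self (by positivity) (by linarith [ht.1])).trans ?_
    gcongr
    nlinarith [pow_nonneg hm 3, pow_nonneg hm 2]
  have h := (convex_Icc 0 τ).norm_image_sub_le_of_norm_hasDerivWithin_le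
    (fun t ht ↦ (hasDerivAt_stdNormalCDF_div_sqrt u ht.1).hasDerivWithinAt) hbound
    ⟨le_rfl, hτ.1⟩ ⟨hτ.1, le_rfl⟩
  simpa [abs_of_nonneg hτ.1] using h

end Time

/-! ### One Lindeberg step -/

section LindebergStep

variable {p η : ℝ}

/-- The factor of the `2p`-th moment when a third-order Taylor remainder is split into a small
(at most `η`) multiple of a second moment and a multiple of the `2p`-th moment; `2 ^ 17` is the
constant of the Taylor estimates. -/
noncomputable def lindebergConst (p η : ℝ) : ℝ := 2 ^ 17 * max 1 ((η / 2 ^ 17) ^ (3 - 2 * p))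

/-- The weight of the second moment in the remainder of a Lindeberg step with remaining variance
`r` at the normalised point `u`. -/
noncomputable def stepWeight (p r u : ℝ) : ℝ := r ^ (-((3 + 1 / p) / 2)) / (1 + u ^ 2)

lemma stepWeight_nonneg {r : ℝ} (hr : 0 ≤ r) (u : ℝ) : 0 ≤ stepWeight p r u := by
  unfold stepWeight; positivity

lemma stepWeight_le_one {r : ℝ} (hp : 0 ≤ p) (hr : 1 ≤ r) (u : ℝ) : stepWeight p r u ≤ 1 := by
  have hrpow : r ^ (-((3 + 1 / p) / 2)) ≤ 1 :=
    Real.rpow_le_one_of_one_le_of_nonpos hr (neg_nonpos.2 (by positivity))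
  exact div_le_one_of_le₀ (by nlinarith [sq_nonneg u]) (by positivity)

lemma two_pow_le_lindebergConst (p η : ℝ) : 2 ^ 17 ≤ lindebergConst p η :=
  le_mul_of_one_le_right (by norm_num) (le_max_left _ _)

lemma lindebergConst_pos (p η : ℝ) : 0 < lindebergConst p η :=
  lt_of_lt_of_le (by norm_num) (two_pow_le_lindebergConst p η)

lemma rpow_three_sub_two_mul_le {R m : ℝ} (hp : 3 ≤ 2 * p) (hη : 0 < η) (hR : 1 ≤ R)
    (hm : η * R ^ (-(1 / p)) < m) : m ^ 3 / R ^ 3 ≤ η ^ (3 - 2 * p) * m ^ (2 * p) := by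
  have hR0 : 0 < R := by linarith
  have hp0 : 0 < p := by linarith
  have hlow : 0 < η * R ^ (-(1 / p)) := by positivity
  have hm0 : 0 < m := hlow.trans hm
  have hexp : -(1 / p) * (3 - 2 * p) ≤ (3 : ℕ) := by
    have : -(1 / p) * (3 - 2 * p) = 2 - 3 / p := by field_simp; ring
    have : 0 < 3 / p := by positivity
    push_cast; linarith
  have hpow : m ^ (3 - 2 * p) ≤ η ^ (3 - 2 * p) * R ^ 3 := by
    calc m ^ (3 - 2 * p) ≤ (η * R ^ (-(1 / p))) ^ (3 - 2 * p) :=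
          Real.rpow_le_rpow_of_nonpos hlow hm.le (by linarith)
      _ = η ^ (3 - 2 * p) * R ^ (-(1 / p) * (3 - 2 * p)) := by
        rw [Real.mul_rpow hη.le (by positivity), ← Real.rpow_mul hR0.le]
      _ ≤ η ^ (3 - 2 * p) * R ^ 3 := by rw [← Real.rpow_natCast R]; gcongr
  have hsplit : m ^ 3 = m ^ (2 * p) * m ^ (3 - 2 * p) := by
    rw [← Real.rpow_add hm0, ← Real.rpow_natCast]; congr 1; push_cast; ring
  rw [hsplit, div_le_iff₀ (by positivity)]
  calc m ^ (2 * p) * m ^ (3 - 2 * p) ≤ m ^ (2 * p) * (η ^ (3 - 2 * p) * R ^ 3) := by gcongr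
    _ = η ^ (3 - 2 * p) * m ^ (2 * p) * R ^ 3 := by ring

lemma pow_three_div_le_add_rpow {R m : ℝ} (hp : 0 < p) (hη : 0 < η) (hR : 1 ≤ R) (hm : 0 ≤ m)
    (hmR : m ≤ R) :
    m ^ 3 / R ^ 3 ≤ η * R ^ (-(3 + 1 / p)) * m ^ 2 + max 1 (η ^ (3 - 2 * p)) * m ^ (2 * p) := by
  have hR0 : 0 < R := by linarith
  have hrpow : R ^ (-(3 + 1 / p)) = R ^ (-(1 / p)) / R ^ 3 := by
    rw [← Real.rpow_natCast, ← Real.rpow_sub hR0]; congr 1; push_cast; ring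
  rcases le_or_gt m (η * R ^ (-(1 / p))) with hsmall | hlarge
  · refine le_add_of_le_of_nonneg ?_ (by positivity)
    calc m ^ 3 / R ^ 3 = m * m ^ 2 / R ^ 3 := by ring
      _ ≤ η * R ^ (-(1 / p)) * m ^ 2 / R ^ 3 := by gcongr
      _ = η * R ^ (-(3 + 1 / p)) * m ^ 2 := by rw [hrpow]; ring
  refine le_add_of_nonneg_of_le (by positivity) ?_
  rcases le_total (2 * p) 3 with h | h
  · calc m ^ 3 / R ^ 3 = (m / R) ^ (3 : ℝ) := by rw [← div_pow]; norm_cast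
      _ ≤ (m / R) ^ (2 * p) := by
        have : 0 < m := lt_of_le_of_lt (by positivity) hlarge
        exact Real.rpow_le_rpow_of_exponent_ge (by positivity) ((div_le_one hR0).2 hmR) h
      _ ≤ m ^ (2 * p) := Real.rpow_le_rpow (by positivity) (div_le_self hm hR) (by positivity)
      _ ≤ max 1 (η ^ (3 - 2 * p)) * m ^ (2 * p) :=
        le_mul_of_one_le_left (by positivity) (le_max_left _ _)
  · exact (rpow_three_sub_two_mul_le h hη hR hlarge).trans (by gcongr; exact le_max_right _ _)

lemma taylor_remainder_le_lindebergConst {r m : ℝ} (hp : 0 < p) (hη : 0 < η) (hr : 1 ≤ r)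
    (hm : 0 ≤ m) (hmr : m ≤ √r) (u : ℝ) :
    2 ^ 17 / (1 + u ^ 2) * (m / √r) ^ 3 ≤
      η * stepWeight p r u * m ^ 2 + lindebergConst p η * m ^ (2 * p) := by
  have hr0 : 0 ≤ r := by linarith
  have hweight : √r ^ (-(3 + 1 / p)) = r ^ (-((3 + 1 / p) / 2)) := by
    rw [Real.sqrt_eq_rpow, ← Real.rpow_mul hr0]; congr 1; ring
  have h := pow_three_div_le_add_rpow hp (by positivity : 0 < η / 2 ^ 17)
    (Real.one_le_sqrt.2 hr) hm hmr
  rw [hweight, ← div_pow] at h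
  calc _ ≤ 2 ^ 17 / (1 + u ^ 2) * (η / 2 ^ 17 * r ^ (-((3 + 1 / p) / 2)) * m ^ 2
          + max 1 ((η / 2 ^ 17) ^ (3 - 2 * p)) * m ^ (2 * p)) := by gcongr
    _ = η * stepWeight p r u * m ^ 2
          + lindebergConst p η * m ^ (2 * p) / (1 + u ^ 2) := by
      unfold lindebergConst stepWeight; field_simp
    _ ≤ _ := by
      have := lindebergConst_pos p η
      gcongr
      exact div_le_self (by positivity) (by nlinarith [sq_nonneg u])

lemma abs_stdNormalCDF_sub_div_sqrt_taylor_le {r : ℝ} (hp : 1 ≤ p) (hη : 0 < η) (hr : 1 ≤ r)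
    (u x : ℝ) :
    |Φ (u - x / √r) - Φ u + φ u * (x / √r) + u * φ u / 2 * (x ^ 2 / r)| ≤
      η * stepWeight p r u * x ^ 2
        + lindebergConst p η * |x| ^ (2 * p) := by
  have hR : 1 ≤ √r := Real.one_le_sqrt.2 hr
  have hweight := stepWeight_nonneg (p := p) (zero_le_one.trans hr) u
  have hξ : |-(x / √r)| = |x| / √r := by
    rw [abs_neg, abs_div, abs_of_nonneg (Real.sqrt_nonneg r)]
  have hξ2 : (-(x / √r)) ^ 2 = x ^ 2 / r := by
    rw [neg_sq, div_pow, Real.sq_sqrt (by linarith)]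
  have hform : Φ (u - x / √r) - Φ u + φ u * (x / √r) + u * φ u / 2 * (x ^ 2 / r) =
      Φ (u + -(x / √r)) - Φ u - φ u * (-(x / √r)) + u * φ u / 2 * (-(x / √r)) ^ 2 := by
    rw [hξ2]; ring_nf
  rw [hform]
  rcases le_total |x| √r with hsmall | hlarge
  · refine (abs_stdNormalCDF_add_taylor_le u (hξ.trans_le ?_)).trans ?_
    · exact (div_le_one (by linarith)).2 hsmall
    · rw [hξ, ← sq_abs x]
      exact taylor_remainder_le_lindebergConst (by linarith) hη hr (abs_nonneg x) hsmall u
  · refine le_add_of_nonneg_of_le (by positivity) ?_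
    have hx2 : x ^ 2 ≤ |x| ^ (2 * p) := by
      calc x ^ 2 = |x| ^ (2 : ℝ) := by rw [← sq_abs]; norm_cast
        _ ≤ |x| ^ (2 * p) := Real.rpow_le_rpow_of_exponent_le (hR.trans hlarge) (by linarith)
    calc _ ≤ 3 * (-(x / √r)) ^ 2 :=
          abs_stdNormalCDF_add_taylor_le_sq u (hξ ▸ (one_le_div (by linarith)).2 hlarge)
      _ ≤ 2 ^ 17 * |x| ^ (2 * p) := by
        rw [hξ2]
        exact mul_le_mul (by norm_num) ((div_le_self (sq_nonneg x) hr).trans hx2)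
          (by positivity) (by norm_num)
      _ ≤ lindebergConst p η * |x| ^ (2 * p) := by
        gcongr; exact two_pow_le_lindebergConst p η

lemma abs_stdNormalCDF_div_sqrt_one_add_taylor_le {r q : ℝ} (hp : 1 ≤ p) (hη : 0 < η)
    (hr : 1 ≤ r) (hq : 0 ≤ q) (u : ℝ) :
    |Φ (u / √(1 + q / r)) - Φ u + u * φ u / 2 * (q / r)| ≤
      η * stepWeight p r u * q + lindebergConst p η * q ^ p := by
  have hr0 : 0 < r := by linarith
  have hweight := stepWeight_nonneg (p := p) hr0.le u
  rcases le_total q r with hsmall | hlarge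
  · have hqr : q / r ∈ Set.Icc 0 1 := ⟨by positivity, (div_le_one hr0).2 hsmall⟩
    have hroot : (√q / √r) ^ 2 = q / r := by rw [div_pow, Real.sq_sqrt hq, Real.sq_sqrt hr0.le]
    have hratio : √q / √r ≤ 1 := (div_le_one (by positivity)).2 (Real.sqrt_le_sqrt hsmall)
    have h := taylor_remainder_le_lindebergConst (p := p) (by linarith) hη hr
      (Real.sqrt_nonneg q) (Real.sqrt_le_sqrt hsmall) u
    rw [Real.rpow_mul (Real.sqrt_nonneg q), Real.rpow_two, Real.sq_sqrt hq] at h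
    refine (abs_stdNormalCDF_div_sqrt_taylor_le u hqr).trans (le_trans ?_ h)
    gcongr
    calc (q / r) ^ 2 = (√q / √r) ^ 4 := by rw [← hroot]; ring
      _ ≤ (√q / √r) ^ 3 := pow_le_pow_of_le_one (by positivity) hratio (by norm_num)
  · refine le_add_of_nonneg_of_le (by positivity) ?_
    have hlin : |u * φ u / 2 * (q / r)| ≤ q := by
      rw [abs_mul, abs_div, abs_two, abs_of_nonneg (by positivity : 0 ≤ q / r)]
      have := abs_mul_gaussianPDFReal_le_one u
      exact (mul_le_of_le_one_left (by positivity) (by linarith)).trans (div_le_self hq hr)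
    calc _ ≤ 1 + q := (abs_add_le _ _).trans (add_le_add (abs_stdNormalCDF_sub_le_one _ _) hlin)
      _ ≤ 2 ^ 17 * q := by linarith
      _ ≤ lindebergConst p η * q ^ p := by
        gcongr
        · exact (lindebergConst_pos p η).le
        · exact two_pow_le_lindebergConst p η
        · exact Real.self_le_rpow_of_one_le (hr.trans hlarge) hp

end LindebergStep

/-! ### The decay kernel and the sum along a path -/

section DecayKernel

variable {b : ℝ}

/-- The kernel `(1 + w²)^(-(1/2 + b))`, integrable for `b > 0`. It measures the concentration of
the law of `S_n` near a point when the second-order terms along a path are summed. -/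
noncomputable def decayKernel (b w : ℝ) : ℝ := (1 + w ^ 2) ^ (-(1 / 2 + b))

lemma decayKernel_nonneg (b w : ℝ) : 0 ≤ decayKernel b w := by unfold decayKernel; positivity

lemma decayKernel_le_one (hb : 0 ≤ b) (w : ℝ) : decayKernel b w ≤ 1 :=
  Real.rpow_le_one_of_one_le_of_nonpos (by nlinarith [sq_nonneg w]) (by linarith)

lemma measurable_decayKernel (b : ℝ) : Measurable (decayKernel b) := by
  unfold decayKernel; fun_prop

lemma rpow_neg_one_sub_mul_le {ρ q : ℝ} (hb : 0 < b) (hρ : 0 < ρ) (hq : 0 ≤ q) :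
    (ρ + q) ^ (-1 - b) * q ≤ 1 / b * (ρ ^ (-b) - (ρ + q) ^ (-b)) := by
  have hR : 0 < ρ + q := by linarith
  have hbernoulli : 1 - b * (ρ / (ρ + q) - 1) ≤ (ρ / (ρ + q)) ^ (-b) := by
    have hx : 0 < ρ / (ρ + q) := by positivity
    have hlog := Real.log_le_sub_one_of_pos hx
    rw [Real.rpow_def_of_pos hx]
    nlinarith [Real.add_one_le_exp (Real.log (ρ / (ρ + q)) * -b)]
  have hmul := mul_le_mul_of_nonneg_left hbernoulli (by positivity : 0 ≤ (ρ + q) ^ (-b))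
  rw [Real.div_rpow hρ.le hR.le, mul_div_cancel₀ _ (by positivity)] at hmul
  have hfac : (ρ + q) ^ (-b) * (1 - b * (ρ / (ρ + q) - 1)) =
      (ρ + q) ^ (-b) + b * ((ρ + q) ^ (-1 - b) * q) := by
    rw [show -1 - b = -b - 1 by ring, Real.rpow_sub_one hR.ne']; field_simp; ring
  rw [hfac] at hmul
  rw [one_div, ← div_eq_inv_mul, le_div_iff₀ hb]
  linarith

lemma rpow_div_one_add_le_decayKernel {R : ℝ} (hb : 0 ≤ b) (hb' : b ≤ 1 / 2) (hR : 1 ≤ R)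
    (w : ℝ) :
    R ^ (-((3 + 4 * b) / 2)) / (1 + w ^ 2 / R) ≤ 2 * R ^ (-1 - b) * decayKernel b w := by
  have hR0 : 0 < R := by linarith
  have hw : 0 < 1 + w ^ 2 := by positivity
  have hamgm : R ^ (1 / 2 - b) * (1 + w ^ 2) ^ (1 / 2 + b) ≤ 2 * (R + w ^ 2) := by
    have := Real.geom_mean_le_arith_mean2_weighted (w₁ := 1 / 2 - b) (w₂ := 1 / 2 + b)
      (by linarith) (by linarith) hR0.le hw.le (by ring)
    nlinarith [sq_nonneg w]
  have hsplit : R ^ (-((3 + 4 * b) / 2)) / (1 + w ^ 2 / R) =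
      R ^ (-1 - b) * (R ^ (1 / 2 - b) / (R + w ^ 2)) := by
    rw [show -((3 + 4 * b) / 2) = -1 - b + (1 / 2 - b) - 1 by ring, Real.rpow_sub_one hR0.ne',
      Real.rpow_add hR0]
    field_simp
  rw [hsplit, mul_comm (2 : ℝ), mul_assoc, decayKernel, Real.rpow_neg hw.le, ← div_eq_mul_inv]
  gcongr ?_ * ?_
  exact (div_le_div_iff₀ (by positivity) (by positivity)).2 hamgm

lemma rpow_neg_le_four_mul_rpow {ρ q s : ℝ} (hρ : 1 ≤ ρ) (hq : 0 ≤ q) (hq1 : q ≤ 1)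
    (hs : 0 ≤ s) (hs2 : s ≤ 2) : ρ ^ (-s) ≤ 4 * (ρ + q) ^ (-s) := by
  have htwo : (2 : ℝ) ^ s ≤ 4 := by
    calc (2 : ℝ) ^ s ≤ 2 ^ (2 : ℝ) := Real.rpow_le_rpow_of_exponent_le (by norm_num) hs2
      _ = 4 := by norm_num
  calc ρ ^ (-s) ≤ ((ρ + q) / 2) ^ (-s) :=
        Real.rpow_le_rpow_of_nonpos (by linarith) (by linarith) (by linarith)
    _ = 2 ^ s * (ρ + q) ^ (-s) := by
      rw [Real.div_rpow (by linarith) (by norm_num), Real.rpow_neg (by norm_num : (0 : ℝ) ≤ 2),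
        div_inv_eq_mul, mul_comm]
    _ ≤ 4 * (ρ + q) ^ (-s) := by gcongr

lemma mul_rpow_div_one_add_le {p ρ q : ℝ} (hp : 1 ≤ p) (hb : 0 < b) (hb4 : b ≤ 1 / 4)
    (hρ : 1 ≤ ρ) (hq : 0 ≤ q) (w : ℝ) :
    q * ρ ^ (-((3 + 4 * b) / 2)) / (1 + w ^ 2 / (ρ + q)) ≤
      8 / b * decayKernel b w * (ρ ^ (-b) - (ρ + q) ^ (-b)) + q ^ p := by
  have hk := decayKernel_nonneg b w
  have hρ0 : 0 < ρ := by linarith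
  rcases le_total q 1 with hsmall | hlarge
  · refine le_add_of_le_of_nonneg ?_ (by positivity)
    calc _ ≤ q * (4 * (ρ + q) ^ (-((3 + 4 * b) / 2))) / (1 + w ^ 2 / (ρ + q)) := by
          gcongr
          exact rpow_neg_le_four_mul_rpow hρ hq hsmall (by linarith) (by linarith)
      _ = 4 * q * ((ρ + q) ^ (-((3 + 4 * b) / 2)) / (1 + w ^ 2 / (ρ + q))) := by ring
      _ ≤ 4 * q * (2 * (ρ + q) ^ (-1 - b) * decayKernel b w) := by
        gcongr
        exact rpow_div_one_add_le_decayKernel hb.le (by linarith) (by linarith) w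
      _ = 8 * decayKernel b w * ((ρ + q) ^ (-1 - b) * q) := by ring
      _ ≤ 8 * decayKernel b w * (1 / b * (ρ ^ (-b) - (ρ + q) ^ (-b))) := by
        exact mul_le_mul_of_nonneg_left (rpow_neg_one_sub_mul_le hb hρ0 hq) (by positivity)
      _ = _ := by ring
  · have hdiff : 0 ≤ ρ ^ (-b) - (ρ + q) ^ (-b) :=
      sub_nonneg.2 (Real.rpow_le_rpow_of_nonpos hρ0 (by linarith) (by linarith))
    refine le_add_of_nonneg_of_le (by positivity) ?_
    have hle : ρ ^ (-((3 + 4 * b) / 2)) ≤ 1 :=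
      Real.rpow_le_one_of_one_le_of_nonpos hρ (by linarith)
    calc q * ρ ^ (-((3 + 4 * b) / 2)) / (1 + w ^ 2 / (ρ + q)) ≤ q * ρ ^ (-((3 + 4 * b) / 2)) :=
          div_le_self (by positivity) (le_add_of_nonneg_right (by positivity))
      _ ≤ q := mul_le_of_le_one_right hq hle
      _ ≤ q ^ p := Real.self_le_rpow_of_one_le hlarge hp

lemma sum_mul_rpow_div_one_add_le {p : ℝ} (hp : 1 ≤ p) (hb : 0 < b) (hb4 : b ≤ 1 / 4) {n : ℕ}
    {r q : ℕ → ℝ} (hr : ∀ i, r (i + 1) + q i = r i) (hr1 : ∀ i ≤ n, 1 ≤ r i)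
    (hq : ∀ i, 0 ≤ q i) (w : ℝ) :
    ∑ i ∈ range n, q i * r (i + 1) ^ (-((3 + 4 * b) / 2)) / (1 + w ^ 2 / r i) ≤
      8 / b * decayKernel b w + ∑ i ∈ range n, q i ^ p := by
  have hk := decayKernel_nonneg b w
  have hterm : ∀ i ∈ range n, q i * r (i + 1) ^ (-((3 + 4 * b) / 2)) / (1 + w ^ 2 / r i) ≤
      8 / b * decayKernel b w * (r (i + 1) ^ (-b) - r i ^ (-b)) + q i ^ p := by
    intro i hi
    rw [← hr i]
    exact mul_rpow_div_one_add_le hp hb hb4 (hr1 _ (mem_range.1 hi)) (hq i) w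
  refine (sum_le_sum hterm).trans ?_
  rw [sum_add_distrib, ← mul_sum, sum_range_sub (fun i ↦ r i ^ (-b))]
  refine add_le_add (mul_le_of_le_one_right (by positivity) ?_) le_rfl
  have hn : r n ^ (-b) ≤ 1 :=
    Real.rpow_le_one_of_one_le_of_nonpos (hr1 n le_rfl) (by linarith)
  have h0 : 0 ≤ r 0 ^ (-b) := Real.rpow_nonneg (by linarith [hr1 0 (Nat.zero_le n)]) _
  linarith

end DecayKernel

/-! ### Martingale differences -/

section MartingaleDifference

variable {Ω : Type*} {mΩ : MeasurableSpace Ω}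

/-- The partial sum `X 0 + ⋯ + X (k - 1)`, as a function on the sample space. -/
def partialSum (X : ℕ → Ω → ℝ) (k : ℕ) (ω : Ω) : ℝ := ∑ i ∈ range k, X i ω

lemma partialSum_zero (X : ℕ → Ω → ℝ) (ω : Ω) : partialSum X 0 ω = 0 := sum_range_zero _

lemma partialSum_succ (X : ℕ → Ω → ℝ) (k : ℕ) (ω : Ω) :
    partialSum X (k + 1) ω = partialSum X k ω + X k ω := sum_range_succ _ k

lemma partialSum_mono {q : ℕ → Ω → ℝ} (hq : ∀ i ω, 0 ≤ q i ω) (ω : Ω) :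
    Monotone fun k ↦ partialSum q k ω :=
  monotone_nat_of_le_succ fun k ↦ by rw [partialSum_succ]; linarith [hq k ω]

/-- Square integrable martingale differences `X i` with conditional variances `q i`. The index is
shifted by one with respect to the usual convention: `X i` is `ℱ (i + 1)`-measurable and `q i` is
the conditional variance given `ℱ i`. A version of `q` that is nonnegative and adapted everywhere
is part of the data, so that it can be used in stopping arguments. -/
structure IsMartingaleDifference (μ : Measure Ω) (ℱ : Filtration ℕ mΩ) (X q : ℕ → Ω → ℝ) :
    Prop where
  measurable_succ : ∀ i, Measurable[ℱ (i + 1)] (X i)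
  measurable_condVar : ∀ i, Measurable[ℱ i] (q i)
  condVar_nonneg : ∀ i ω, 0 ≤ q i ω
  memLp : ∀ i, MemLp (X i) 2 μ
  condExp_eq_zero : ∀ i, μ[X i | ℱ i] =ᵐ[μ] 0
  condExp_sq : ∀ i, μ[fun ω ↦ X i ω ^ 2 | ℱ i] =ᵐ[μ] q i

namespace IsMartingaleDifference

variable {μ : Measure Ω} {ℱ : Filtration ℕ mΩ} {X q : ℕ → Ω → ℝ} {i k : ℕ} {p c : ℝ}

lemma measurable (h : IsMartingaleDifference μ ℱ X q) (i : ℕ) : Measurable (X i) :=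
  (h.measurable_succ i).le (ℱ.le _)

lemma measurable_condVar' (h : IsMartingaleDifference μ ℱ X q) (i : ℕ) : Measurable (q i) :=
  (h.measurable_condVar i).le (ℱ.le _)

lemma measurable_partialSum (h : IsMartingaleDifference μ ℱ X q) (hik : i ≤ k) :
    Measurable[ℱ k] (partialSum X i) :=
  Finset.measurable_fun_sum _ fun j hj ↦
    (h.measurable_succ j).le (ℱ.mono ((mem_range.1 hj).trans_le hik))

lemma measurable_partialSum' (h : IsMartingaleDifference μ ℱ X q) (i : ℕ) :
    Measurable (partialSum X i) := (h.measurable_partialSum le_rfl).le (ℱ.le _)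

lemma measurable_partialSum_condVar (h : IsMartingaleDifference μ ℱ X q) (hik : i ≤ k + 1) :
    Measurable[ℱ k] (partialSum q i) :=
  Finset.measurable_fun_sum _ fun j hj ↦ (h.measurable_condVar j).le
    (ℱ.mono (Nat.lt_succ_iff.1 ((mem_range.1 hj).trans_le hik)))

lemma integrable_condVar (h : IsMartingaleDifference μ ℱ X q) (i : ℕ) : Integrable (q i) μ :=
  integrable_condExp.congr (h.condExp_sq i)

lemma memLp_partialSum (h : IsMartingaleDifference μ ℱ X q) (k : ℕ) :
    MemLp (partialSum X k) 2 μ := memLp_finsetSum _ fun j _ ↦ h.memLp j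

lemma integrable_partialSum_condVar (h : IsMartingaleDifference μ ℱ X q) (k : ℕ) :
    Integrable (partialSum q k) μ := integrable_finsetSum _ fun j _ ↦ h.integrable_condVar j

section FiniteMeasure

variable [IsFiniteMeasure μ] {w : Ω → ℝ}

lemma integrable (h : IsMartingaleDifference μ ℱ X q) (i : ℕ) : Integrable (X i) μ :=
  (h.memLp i).integrable one_le_two

lemma integral_mul_eq_zero (h : IsMartingaleDifference μ ℱ X q) (hw : Measurable[ℱ i] w)
    (hint : Integrable (fun ω ↦ w ω * X i ω) μ) : ∫ ω, w ω * X i ω ∂μ = 0 := by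
  have hpull : μ[fun ω ↦ w ω * X i ω | ℱ i] =ᵐ[μ] 0 := by
    filter_upwards [condExp_mul_of_stronglyMeasurable_left hw.stronglyMeasurable hint
      (h.integrable i), h.condExp_eq_zero i] with ω hω hω0
    rw [Pi.mul_apply, hω0, Pi.zero_apply, mul_zero] at hω
    exact hω
  rw [← integral_condExp (ℱ.le i), integral_congr_ae hpull, Pi.zero_def, integral_zero]

lemma condExp_mul_sq (h : IsMartingaleDifference μ ℱ X q) (hw : Measurable[ℱ i] w)
    (hc : ∀ ω, |w ω| ≤ c) :
    μ[fun ω ↦ w ω * X i ω ^ 2 | ℱ i] =ᵐ[μ] fun ω ↦ w ω * q i ω := by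
  filter_upwards [condExp_stronglyMeasurable_mul_of_bound (ℱ.le i) hw.stronglyMeasurable
    (h.memLp i).integrable_sq c (ae_of_all _ hc), h.condExp_sq i] with ω hω hωq
  rw [Pi.mul_apply, hωq] at hω
  exact hω

lemma integral_mul_sq (h : IsMartingaleDifference μ ℱ X q) (hw : Measurable[ℱ i] w)
    (hc : ∀ ω, |w ω| ≤ c) : ∫ ω, w ω * X i ω ^ 2 ∂μ = ∫ ω, w ω * q i ω ∂μ := by
  rw [← integral_congr_ae (h.condExp_mul_sq hw hc), integral_condExp]

lemma integral_mul_sq_partialSum_sub (h : IsMartingaleDifference μ ℱ X q)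
    (hw : Measurable[ℱ i] w) (hc : ∀ ω, |w ω| ≤ c) (hik : i ≤ k) :
    ∫ ω, w ω * (partialSum X k ω - partialSum X i ω) ^ 2 ∂μ =
      ∫ ω, w ω * (partialSum q k ω - partialSum q i ω) ∂μ := by
  have hw' : AEStronglyMeasurable w μ := (hw.le (ℱ.le i)).aestronglyMeasurable
  have hbdd {f : Ω → ℝ} (hf : Integrable f μ) : Integrable (fun ω ↦ w ω * f ω) μ :=
    hf.bdd_mul hw' (ae_of_all _ hc)
  induction k, hik using Nat.le_induction with
  | base => simp
  | succ k hik ih =>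
    have hwk : Measurable[ℱ k] w := hw.le (ℱ.mono hik)
    have hinc : MemLp (fun ω ↦ partialSum X k ω - partialSum X i ω) 2 μ :=
      (h.memLp_partialSum k).sub (h.memLp_partialSum i)
    have hqinc : Integrable (fun ω ↦ partialSum q k ω - partialSum q i ω) μ :=
      (h.integrable_partialSum_condVar k).sub (h.integrable_partialSum_condVar i)
    have hcross : Integrable
        (fun ω ↦ 2 * w ω * (partialSum X k ω - partialSum X i ω) * X k ω) μ :=
      ((hbdd (hinc.integrable_mul (h.memLp k))).const_mul 2).congr
        (ae_of_all _ fun ω ↦ by simp only [Pi.mul_apply]; ring)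
    have hcross_zero :
        ∫ ω, 2 * w ω * (partialSum X k ω - partialSum X i ω) * X k ω ∂μ = 0 :=
      h.integral_mul_eq_zero ((hwk.const_mul 2).mul
        ((h.measurable_partialSum le_rfl).sub (h.measurable_partialSum hik))) hcross
    have hsq : Integrable (fun ω ↦ w ω * X k ω ^ 2) μ := hbdd (h.memLp k).integrable_sq
    have hcross_sq : Integrable (fun ω ↦ 2 * w ω * (partialSum X k ω - partialSum X i ω) * X k ω
        + w ω * X k ω ^ 2) μ := hcross.add hsq
    have hleft (ω : Ω) : w ω * (partialSum X (k + 1) ω - partialSum X i ω) ^ 2 =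
        w ω * (partialSum X k ω - partialSum X i ω) ^ 2
          + (2 * w ω * (partialSum X k ω - partialSum X i ω) * X k ω + w ω * X k ω ^ 2) := by
      rw [partialSum_succ]; ring
    have hright (ω : Ω) : w ω * (partialSum q (k + 1) ω - partialSum q i ω) =
        w ω * (partialSum q k ω - partialSum q i ω) + w ω * q k ω := by
      rw [partialSum_succ]; ring
    simp only [hleft, hright]
    rw [integral_add (hbdd hinc.integrable_sq) hcross_sq, integral_add hcross hsq,
      integral_add (hbdd hqinc) (hbdd (h.integrable_condVar k)), ih, hcross_zero,
      h.integral_mul_sq hwk hc, zero_add]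

end FiniteMeasure

lemma condVar_rpow_le (h : IsMartingaleDifference μ ℱ X q) (hp : 1 ≤ p)
    (hX : Integrable (fun ω ↦ |X i ω| ^ (2 * p)) μ) :
    (fun ω ↦ q i ω ^ p) ≤ᵐ[μ] μ[fun ω ↦ |X i ω| ^ (2 * p) | ℱ i] := by
  have hpow (ω : Ω) : ‖X i ω ^ 2‖ ^ p = |X i ω| ^ (2 * p) := by
    rw [Real.rpow_mul (abs_nonneg _), Real.rpow_two, Real.norm_eq_abs, abs_pow]
  have hjensen := Integrable.norm_condExp_rpow_le (m := ℱ i) (f := fun ω ↦ X i ω ^ 2) hp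
    (by simpa only [hpow] using hX)
  simp only [hpow] at hjensen
  filter_upwards [hjensen, h.condExp_sq i] with ω hω hωq
  rwa [hωq, Real.norm_of_nonneg (h.condVar_nonneg i ω)] at hω

lemma integrable_condVar_rpow (h : IsMartingaleDifference μ ℱ X q) (hp : 1 ≤ p)
    (hX : Integrable (fun ω ↦ |X i ω| ^ (2 * p)) μ) : Integrable (fun ω ↦ q i ω ^ p) μ := by
  refine Integrable.mono' (g := μ[fun ω ↦ |X i ω| ^ (2 * p) | ℱ i]) integrable_condExp
    ((h.measurable_condVar' i).pow_const p).aestronglyMeasurable ?_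
  filter_upwards [h.condVar_rpow_le hp hX] with ω hω
  rwa [Real.norm_of_nonneg (Real.rpow_nonneg (h.condVar_nonneg i ω) p)]

lemma integral_condVar_rpow_le [IsFiniteMeasure μ] (h : IsMartingaleDifference μ ℱ X q)
    (hp : 1 ≤ p) (hX : Integrable (fun ω ↦ |X i ω| ^ (2 * p)) μ) :
    ∫ ω, q i ω ^ p ∂μ ≤ ∫ ω, |X i ω| ^ (2 * p) ∂μ := by
  rw [← integral_condExp (ℱ.le i) (f := fun ω ↦ |X i ω| ^ (2 * p))]
  exact integral_mono_ae (h.integrable_condVar_rpow hp hX) integrable_condExp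
    (h.condVar_rpow_le hp hX)

end IsMartingaleDifference

end MartingaleDifference

/-! ### The smoothed central limit theorem -/

section Lindeberg

variable {Ω : Type*} {mΩ : MeasurableSpace Ω} {μ : Measure Ω} {ℱ : Filtration ℕ mΩ}
  {X q : ℕ → Ω → ℝ} {i k n : ℕ} {p c y η T : ℝ}

lemma one_div_one_add_sq_sub_ge {r : ℝ} (hr : 0 < r) (a d : ℝ) :
    3 / 8 * (1 / (1 + a ^ 2 / r)) - 1 / 8 * (1 / (1 + a ^ 2 / r) / r * d ^ 2) ≤
      1 / (1 + (a - d) ^ 2 / r) := by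
  have : 0 < 1 + a ^ 2 / r := by positivity
  have hz : 0 ≤ d ^ 2 / r := by positivity
  have hle : 1 + (a - d) ^ 2 / r ≤ 2 * (1 + d ^ 2 / r) * (1 + a ^ 2 / r) := by
    have hsq : (a - d) ^ 2 / r ≤ 2 * (a ^ 2 / r) + 2 * (d ^ 2 / r) := by
      rw [← mul_div_assoc, ← mul_div_assoc, ← add_div]
      gcongr
      nlinarith [sq_nonneg (a + d)]
    nlinarith [mul_nonneg hz (by positivity : 0 ≤ a ^ 2 / r)]
  calc _ = (3 - d ^ 2 / r) / 8 * (1 / (1 + a ^ 2 / r)) := by ring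
    _ ≤ 1 / (2 * (1 + d ^ 2 / r)) * (1 / (1 + a ^ 2 / r)) := by
      refine mul_le_mul_of_nonneg_right ?_ (by positivity)
      rw [div_le_div_iff₀ (by norm_num) (by positivity)]
      nlinarith [sq_nonneg (d ^ 2 / r - 1)]
    _ = 1 / (2 * (1 + d ^ 2 / r) * (1 + a ^ 2 / r)) := one_div_mul_one_div _ _
    _ ≤ 1 / (1 + (a - d) ^ 2 / r) := one_div_le_one_div_of_le (by positivity) hle

lemma integrable_div_one_add_sq_div [IsFiniteMeasure μ] {w r f : Ω → ℝ} (hw : Measurable w)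
    (hr : Measurable r) (hf : Measurable f) (hw0 : ∀ ω, 0 ≤ w ω) (hwc : ∀ ω, w ω ≤ c)
    (hr0 : ∀ ω, 0 ≤ r ω) : Integrable (fun ω ↦ w ω / (1 + f ω ^ 2 / r ω)) μ := by
  have hmeas : Measurable fun ω ↦ w ω / (1 + f ω ^ 2 / r ω) := by fun_prop
  refine Integrable.of_bound hmeas.aestronglyMeasurable c (ae_of_all _ fun ω ↦ ?_)
  have hden : 0 ≤ f ω ^ 2 / r ω := div_nonneg (sq_nonneg _) (hr0 ω)
  rw [Real.norm_of_nonneg (div_nonneg (hw0 ω) (by linarith))]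
  exact (div_le_self (hw0 ω) (by linarith)).trans (hwc ω)

lemma integrable_stdNormalCDF_comp [IsFiniteMeasure μ] {f : Ω → ℝ} (hf : Measurable f) :
    Integrable (fun ω ↦ Φ (f ω)) μ :=
  Integrable.of_bound (continuous_stdNormalCDF.measurable.comp hf).aestronglyMeasurable 1
    (ae_of_all _ fun ω ↦ by
      rw [Real.norm_of_nonneg (stdNormalCDF_nonneg _)]; exact stdNormalCDF_le_one _)

lemma integrable_decayKernel [IsFiniteMeasure μ] {b : ℝ} {f : Ω → ℝ} (hb : 0 ≤ b)
    (hf : Measurable f) : Integrable (fun ω ↦ decayKernel b (f ω)) μ :=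
  Integrable.of_bound ((measurable_decayKernel b).comp hf).aestronglyMeasurable 1
    (ae_of_all _ fun ω ↦ by
      rw [Real.norm_of_nonneg (decayKernel_nonneg _ _)]; exact decayKernel_le_one hb _)

lemma abs_integral_sub_add_integral_le {f g v b : Ω → ℝ} (hf : Integrable f μ)
    (hg : Integrable g μ) (hv : Integrable v μ) (hb : Integrable b μ)
    (hle : ∀ ω, |f ω - g ω + v ω| ≤ b ω) :
    |∫ ω, f ω ∂μ - ∫ ω, g ω ∂μ + ∫ ω, v ω ∂μ| ≤ ∫ ω, b ω ∂μ := by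
  have hfg : Integrable (fun ω ↦ f ω - g ω) μ := hf.sub hg
  rw [← integral_sub hf hg, ← integral_add hfg hv, ← Real.norm_eq_abs]
  exact norm_integral_le_of_norm_le hb (ae_of_all _ hle)

lemma abs_gaussianPDFReal_div_sqrt_le_one {r : ℝ} (hr : 1 ≤ r) (u : ℝ) : |φ u / √r| ≤ 1 := by
  have hφ := gaussianPDFReal_nonneg 0 1 u
  rw [abs_of_nonneg (div_nonneg hφ (Real.sqrt_nonneg _))]
  exact (div_le_self hφ (Real.one_le_sqrt.2 hr)).trans (gaussianPDFReal_zero_one_le_one u)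

lemma abs_mul_gaussianPDFReal_div_two_div_le_one {r : ℝ} (hr : 1 ≤ r) (u : ℝ) :
    |u * φ u / 2 / r| ≤ 1 := by
  rw [abs_div, abs_div, abs_two, abs_of_nonneg (zero_le_one.trans hr)]
  have := abs_mul_gaussianPDFReal_le_one u
  exact (div_le_self (by positivity) hr).trans (by linarith)

lemma abs_stepWeight_le_one {r : ℝ} (hp : 0 ≤ p) (hr : 1 ≤ r) (u : ℝ) :
    |stepWeight p r u| ≤ 1 :=
  (abs_of_nonneg (stepWeight_nonneg (zero_le_one.trans hr) u)).trans_le (stepWeight_le_one hp hr u)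

section Measurability

variable {m : MeasurableSpace Ω} {u r : Ω → ℝ}

lemma measurable_gaussianPDFReal_div_sqrt (hu : Measurable[m] u) (hr : Measurable[m] r) :
    Measurable[m] fun ω ↦ φ (u ω) / √(r ω) := by
  have := continuous_gaussianPDFReal_zero_one.measurable
  fun_prop

lemma measurable_mul_gaussianPDFReal_div_two_div (hu : Measurable[m] u) (hr : Measurable[m] r) :
    Measurable[m] fun ω ↦ u ω * φ (u ω) / 2 / r ω := by
  have := continuous_gaussianPDFReal_zero_one.measurable
  fun_prop

lemma measurable_stepWeight (hu : Measurable[m] u) (hr : Measurable[m] r) :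
    Measurable[m] fun ω ↦ stepWeight p (r ω) (u ω) := by
  unfold stepWeight; fun_prop

end Measurability

/-- The variance `1 + T - (q 0 + ⋯ + q (k - 1))` of the Gaussian that smooths the law of the `k`-th
partial sum when the variances `q i` add up to at most `T`: each step of the martingale trades
variance of the martingale for variance of the Gaussian, of which at least `1` is left. -/
def remainingVar (q : ℕ → Ω → ℝ) (T : ℝ) (k : ℕ) (ω : Ω) : ℝ := 1 + T - partialSum q k ω

lemma remainingVar_zero (q : ℕ → Ω → ℝ) (T : ℝ) (ω : Ω) : remainingVar q T 0 ω = 1 + T := by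
  rw [remainingVar, partialSum_zero, sub_zero]

lemma remainingVar_succ_add (q : ℕ → Ω → ℝ) (T : ℝ) (k : ℕ) (ω : Ω) :
    remainingVar q T (k + 1) ω + q k ω = remainingVar q T k ω := by
  rw [remainingVar, remainingVar, partialSum_succ]; ring

lemma one_le_remainingVar (hq : ∀ i ω, 0 ≤ q i ω) (hT : ∀ ω, partialSum q n ω ≤ T) (hk : k ≤ n)
    (ω : Ω) : 1 ≤ remainingVar q T k ω := by
  have := partialSum_mono hq ω hk
  dsimp only at this
  rw [remainingVar]
  linarith [hT ω]

lemma div_sqrt_div_sqrt_one_add_div {r : ℝ} (hr : 0 < r) (a v : ℝ) :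
    a / √r / √(1 + v / r) = a / √(r + v) := by
  rw [div_div, ← Real.sqrt_mul hr.le, mul_add, mul_one, mul_div_cancel₀ _ hr.ne']

lemma stepWeight_div_sqrt_le {r : ℝ} (hr : 0 < r) {v : ℝ} (hv : 0 ≤ v) (a : ℝ) :
    stepWeight p r (a / √r) ≤ r ^ (-((3 + 1 / p) / 2)) / (1 + a ^ 2 / (r + v)) := by
  rw [stepWeight, div_pow, Real.sq_sqrt hr.le]
  gcongr
  linarith

lemma mul_rpow_remainingVar_nonneg (hq : ∀ i ω, 0 ≤ q i ω) (hT : ∀ ω, partialSum q n ω ≤ T)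
    (hi : i < n) (s : ℝ) (ω : Ω) : 0 ≤ q i ω * remainingVar q T (i + 1) ω ^ s :=
  mul_nonneg (hq i ω) (Real.rpow_nonneg
    (zero_le_one.trans (one_le_remainingVar hq hT (Nat.succ_le_of_lt hi) ω)) s)

lemma mul_rpow_remainingVar_le (hq : ∀ i ω, 0 ≤ q i ω) (hT : ∀ ω, partialSum q n ω ≤ T)
    (hi : i < n) {s : ℝ} (hs : s ≤ 0) (ω : Ω) : q i ω * remainingVar q T (i + 1) ω ^ s ≤ T :=
  calc q i ω * remainingVar q T (i + 1) ω ^ s ≤ q i ω := mul_le_of_le_one_right (hq i ω)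
        (Real.rpow_le_one_of_one_le_of_nonpos
          (one_le_remainingVar hq hT (Nat.succ_le_of_lt hi) ω) hs)
    _ ≤ partialSum q n ω :=
      single_le_sum (f := fun j ↦ q j ω) (fun j _ ↦ hq j ω) (mem_range.2 hi)
    _ ≤ T := hT ω

namespace IsMartingaleDifference

lemma measurable_remainingVar (h : IsMartingaleDifference μ ℱ X q) (T : ℝ) (hik : i ≤ k + 1) :
    Measurable[ℱ k] (remainingVar q T i) :=
  (h.measurable_partialSum_condVar hik).const_sub (1 + T)

section FiniteMeasure

variable [IsFiniteMeasure μ]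

lemma integral_mul_sq_partialSum_sub_le (h : IsMartingaleDifference μ ℱ X q) (hik : i ≤ k)
    {v r : Ω → ℝ} (hv : Measurable[ℱ i] v) (hv0 : ∀ ω, 0 ≤ v ω) (hvc : ∀ ω, v ω ≤ c)
    (hvr : Integrable (fun ω ↦ v ω * r ω) μ)
    (hq : ∀ ω, partialSum q k ω - partialSum q i ω ≤ r ω) :
    ∫ ω, v ω * (partialSum X k ω - partialSum X i ω) ^ 2 ∂μ ≤ ∫ ω, v ω * r ω ∂μ := by
  have hvc' (ω : Ω) : |v ω| ≤ c := (abs_of_nonneg (hv0 ω)).trans_le (hvc ω)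
  rw [h.integral_mul_sq_partialSum_sub hv hvc' hik]
  refine integral_mono (Integrable.bdd_mul ?_ (hv.le (ℱ.le i)).aestronglyMeasurable
    (ae_of_all _ hvc')) hvr fun ω ↦ mul_le_mul_of_nonneg_left (hq ω) (hv0 ω)
  exact (h.integrable_partialSum_condVar k).sub (h.integrable_partialSum_condVar i)

/- Replacing the `i`-th by the `k`-th partial sum costs only a constant factor, because the
increment has conditional variance at most `r`. -/
lemma integral_div_one_add_sq_le (h : IsMartingaleDifference μ ℱ X q) (hik : i ≤ k) (y : ℝ)
    {w r : Ω → ℝ} (hw : Measurable[ℱ i] w) (hr : Measurable[ℱ i] r) (hw0 : ∀ ω, 0 ≤ w ω)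
    (hwc : ∀ ω, w ω ≤ c) (hr1 : ∀ ω, 1 ≤ r ω)
    (hq : ∀ ω, partialSum q k ω - partialSum q i ω ≤ r ω) :
    ∫ ω, w ω / (1 + (y - partialSum X i ω) ^ 2 / r ω) ∂μ ≤
      4 * ∫ ω, w ω / (1 + (y - partialSum X k ω) ^ 2 / r ω) ∂μ := by
  have hr0 (ω : Ω) : 0 < r ω := by linarith [hr1 ω]
  have hint (j : ℕ) : Integrable (fun ω ↦ w ω / (1 + (y - partialSum X j ω) ^ 2 / r ω)) μ :=
    integrable_div_one_add_sq_div (hw.le (ℱ.le i)) (hr.le (ℱ.le i))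
      ((h.measurable_partialSum' j).const_sub y) hw0 hwc fun ω ↦ (hr0 ω).le
  set v : Ω → ℝ := fun ω ↦ w ω / (1 + (y - partialSum X i ω) ^ 2 / r ω) / r ω with hv
  have hvmeas : Measurable[ℱ i] v := by
    have := h.measurable_partialSum (le_refl i)
    fun_prop
  have hden (ω : Ω) : 0 ≤ (y - partialSum X i ω) ^ 2 / r ω := div_nonneg (sq_nonneg _) (hr0 ω).le
  have hquot0 (ω : Ω) : 0 ≤ w ω / (1 + (y - partialSum X i ω) ^ 2 / r ω) :=
    div_nonneg (hw0 ω) (by linarith [hden ω])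
  have hv0 (ω : Ω) : 0 ≤ v ω := div_nonneg (hquot0 ω) (hr0 ω).le
  have hvc (ω : Ω) : v ω ≤ c := (div_le_self (hquot0 ω) (hr1 ω)).trans
    ((div_le_self (hw0 ω) (by linarith [hden ω])).trans (hwc ω))
  have hvr (ω : Ω) : v ω * r ω = w ω / (1 + (y - partialSum X i ω) ^ 2 / r ω) :=
    div_mul_cancel₀ _ (hr0 ω).ne'
  have hincr := h.integral_mul_sq_partialSum_sub_le hik hvmeas hv0 hvc
    (by simpa only [hvr] using hint i) hq
  simp only [hvr] at hincr
  have hpoint (ω : Ω) : 3 / 8 * (w ω / (1 + (y - partialSum X i ω) ^ 2 / r ω))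
      - 1 / 8 * (v ω * (partialSum X k ω - partialSum X i ω) ^ 2) ≤
        w ω / (1 + (y - partialSum X k ω) ^ 2 / r ω) := by
    have := mul_le_mul_of_nonneg_left (one_div_one_add_sq_sub_ge (hr0 ω)
      (y - partialSum X i ω) (partialSum X k ω - partialSum X i ω)) (hw0 ω)
    rw [sub_sub_sub_cancel_right] at this
    simp only [hv]
    linear_combination this
  have hsq : Integrable (fun ω ↦ v ω * (partialSum X k ω - partialSum X i ω) ^ 2) μ :=
    ((h.memLp_partialSum k).sub (h.memLp_partialSum i)).integrable_sq.bdd_mul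
      (hvmeas.le (ℱ.le i)).aestronglyMeasurable
      (ae_of_all _ fun ω ↦ (Real.norm_of_nonneg (hv0 ω)).trans_le (hvc ω))
  have hle := integral_mono (((hint i).const_mul (3 / 8)).sub (hsq.const_mul (1 / 8))) (hint k)
    hpoint
  rw [integral_sub' ((hint i).const_mul _) (hsq.const_mul _), integral_const_mul,
    integral_const_mul] at hle
  linarith

section Step

variable {u r : Ω → ℝ}

lemma abs_integral_stdNormalCDF_sub_div_sqrt_le (h : IsMartingaleDifference μ ℱ X q)
    (hp : 1 ≤ p) (hη : 0 < η) (hX : Integrable (fun ω ↦ |X i ω| ^ (2 * p)) μ)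
    (hu : Measurable[ℱ i] u) (hr : Measurable[ℱ i] r) (hr1 : ∀ ω, 1 ≤ r ω) :
    |∫ ω, Φ (u ω - X i ω / √(r ω)) ∂μ - ∫ ω, Φ (u ω) ∂μ
        + ∫ ω, u ω * φ (u ω) / 2 / r ω * q i ω ∂μ| ≤
      η * ∫ ω, stepWeight p (r ω) (u ω) * q i ω ∂μ
        + lindebergConst p η * ∫ ω, |X i ω| ^ (2 * p) ∂μ := by
  have hXsq := (h.memLp i).integrable_sq
  have hlin_meas := measurable_gaussianPDFReal_div_sqrt hu hr
  have hlin : Integrable (fun ω ↦ φ (u ω) / √(r ω) * X i ω) μ :=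
    (h.integrable i).bdd_mul (hlin_meas.le (ℱ.le i)).aestronglyMeasurable
      (ae_of_all _ fun ω ↦ abs_gaussianPDFReal_div_sqrt_le_one (hr1 ω) (u ω))
  have hquad_meas := measurable_mul_gaussianPDFReal_div_two_div hu hr
  have hquad_le (ω : Ω) := abs_mul_gaussianPDFReal_div_two_div_le_one (hr1 ω) (u ω)
  have hquad : Integrable (fun ω ↦ u ω * φ (u ω) / 2 / r ω * X i ω ^ 2) μ :=
    hXsq.bdd_mul (hquad_meas.le (ℱ.le i)).aestronglyMeasurable (ae_of_all _ hquad_le)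
  have hweight_meas := measurable_stepWeight (p := p) hu hr
  have hweight_le (ω : Ω) := abs_stepWeight_le_one (p := p) (by linarith) (hr1 ω) (u ω)
  have hweight : Integrable (fun ω ↦ stepWeight p (r ω) (u ω) * X i ω ^ 2) μ :=
    hXsq.bdd_mul (hweight_meas.le (ℱ.le i)).aestronglyMeasurable (ae_of_all _ hweight_le)
  have hbound := abs_integral_sub_add_integral_le
    (integrable_stdNormalCDF_comp
      ((hu.le (ℱ.le i)).sub ((h.measurable i).div (hr.le (ℱ.le i)).sqrt)))
    (integrable_stdNormalCDF_comp (hu.le (ℱ.le i))) (hlin.add hquad)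
    ((hweight.const_mul η).add (hX.const_mul (lindebergConst p η))) fun ω ↦ by
      have htaylor := abs_stdNormalCDF_sub_div_sqrt_taylor_le hp hη (hr1 ω) (u ω) (X i ω)
      simp only [Pi.add_apply, Pi.sub_apply, Pi.div_apply]
      convert htaylor using 1
      · congr 1; ring
      · ring
  rwa [integral_add' hlin hquad, h.integral_mul_eq_zero hlin_meas hlin, zero_add,
    h.integral_mul_sq hquad_meas hquad_le, integral_add' (hweight.const_mul η) (hX.const_mul _),
    integral_const_mul, integral_const_mul, h.integral_mul_sq hweight_meas hweight_le] at hbound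

lemma abs_integral_stdNormalCDF_div_sqrt_one_add_le (h : IsMartingaleDifference μ ℱ X q)
    (hp : 1 ≤ p) (hη : 0 < η) (hX : Integrable (fun ω ↦ |X i ω| ^ (2 * p)) μ)
    (hu : Measurable[ℱ i] u) (hr : Measurable[ℱ i] r) (hr1 : ∀ ω, 1 ≤ r ω) :
    |∫ ω, Φ (u ω / √(1 + q i ω / r ω)) ∂μ - ∫ ω, Φ (u ω) ∂μ
        + ∫ ω, u ω * φ (u ω) / 2 / r ω * q i ω ∂μ| ≤
      η * ∫ ω, stepWeight p (r ω) (u ω) * q i ω ∂μ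
        + lindebergConst p η * ∫ ω, |X i ω| ^ (2 * p) ∂μ := by
  have hu' := hu.le (ℱ.le i)
  have hr' := hr.le (ℱ.le i)
  have hq' := h.measurable_condVar' i
  have hquad : Integrable (fun ω ↦ u ω * φ (u ω) / 2 / r ω * q i ω) μ :=
    (h.integrable_condVar i).bdd_mul
      (measurable_mul_gaussianPDFReal_div_two_div hu' hr').aestronglyMeasurable
      (ae_of_all _ fun ω ↦ abs_mul_gaussianPDFReal_div_two_div_le_one (hr1 ω) (u ω))
  have hweight : Integrable (fun ω ↦ stepWeight p (r ω) (u ω) * q i ω) μ :=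
    (h.integrable_condVar i).bdd_mul (measurable_stepWeight hu' hr').aestronglyMeasurable
      (ae_of_all _ fun ω ↦ abs_stepWeight_le_one (by linarith) (hr1 ω) (u ω))
  have hqp := h.integrable_condVar_rpow hp hX
  have hbound := abs_integral_sub_add_integral_le
    (integrable_stdNormalCDF_comp (by fun_prop : Measurable fun ω ↦ u ω / √(1 + q i ω / r ω)))
    (integrable_stdNormalCDF_comp hu') hquad
    ((hweight.const_mul η).add (hqp.const_mul (lindebergConst p η))) fun ω ↦ by
      have htaylor := abs_stdNormalCDF_div_sqrt_one_add_taylor_le hp hη (hr1 ω)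
        (h.condVar_nonneg i ω) (u ω)
      simp only [Pi.add_apply]
      convert htaylor using 1
      · congr 1; ring
      · ring
  rw [integral_add' (hweight.const_mul η) (hqp.const_mul _), integral_const_mul,
    integral_const_mul] at hbound
  refine hbound.trans ?_
  have := h.integral_condVar_rpow_le hp hX
  have := (lindebergConst_pos p η).le
  gcongr

lemma abs_integral_stdNormalCDF_sub_integral_le (h : IsMartingaleDifference μ ℱ X q)
    (hp : 1 ≤ p) (hη : 0 < η) (hX : Integrable (fun ω ↦ |X i ω| ^ (2 * p)) μ)
    (hu : Measurable[ℱ i] u) (hr : Measurable[ℱ i] r) (hr1 : ∀ ω, 1 ≤ r ω) :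
    |∫ ω, Φ (u ω - X i ω / √(r ω)) ∂μ - ∫ ω, Φ (u ω / √(1 + q i ω / r ω)) ∂μ| ≤
      2 * η * ∫ ω, stepWeight p (r ω) (u ω) * q i ω ∂μ
        + 2 * lindebergConst p η * ∫ ω, |X i ω| ^ (2 * p) ∂μ := by
  have hX' := h.abs_integral_stdNormalCDF_sub_div_sqrt_le hp hη hX hu hr hr1
  have hq' := h.abs_integral_stdNormalCDF_div_sqrt_one_add_le hp hη hX hu hr hr1
  rw [abs_le] at hX' hq' ⊢
  constructor <;> linarith

end Step

lemma abs_integral_stdNormalCDF_succ_sub_le (h : IsMartingaleDifference μ ℱ X q)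
    (hp : 1 ≤ p) (hη : 0 < η) (hX : Integrable (fun ω ↦ |X i ω| ^ (2 * p)) μ)
    (hT : ∀ ω, partialSum q n ω ≤ T) (hi : i < n) (y : ℝ) :
    |∫ ω, Φ ((y - partialSum X (i + 1) ω) / √(remainingVar q T (i + 1) ω)) ∂μ
        - ∫ ω, Φ ((y - partialSum X i ω) / √(remainingVar q T i ω)) ∂μ| ≤
      2 * η * ∫ ω, stepWeight p (remainingVar q T (i + 1) ω)
          ((y - partialSum X i ω) / √(remainingVar q T (i + 1) ω)) * q i ω ∂μ
        + 2 * lindebergConst p η * ∫ ω, |X i ω| ^ (2 * p) ∂μ := by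
  have hr := h.measurable_remainingVar T (le_refl (i + 1))
  have hr1 := one_le_remainingVar h.condVar_nonneg hT (Nat.succ_le_of_lt hi)
  have hS := h.measurable_partialSum (le_refl i)
  have hstep := h.abs_integral_stdNormalCDF_sub_integral_le hp hη hX
    (u := fun ω ↦ (y - partialSum X i ω) / √(remainingVar q T (i + 1) ω)) (by fun_prop) hr hr1
  have hvar (ω : Ω) := div_sqrt_div_sqrt_one_add_div (zero_lt_one.trans_le (hr1 ω))
    (y - partialSum X i ω) (q i ω)
  simpa only [hvar, remainingVar_succ_add, ← sub_div, sub_sub, ← partialSum_succ] using hstep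

lemma integrable_mul_rpow_remainingVar_div (h : IsMartingaleDifference μ ℱ X q) {s : ℝ}
    (hs : s ≤ 0) (hT : ∀ ω, partialSum q n ω ≤ T) (hi : i < n) (k : ℕ) (y : ℝ) :
    Integrable (fun ω ↦ q i ω * remainingVar q T (i + 1) ω ^ s
      / (1 + (y - partialSum X k ω) ^ 2 / remainingVar q T i ω)) μ :=
  integrable_div_one_add_sq_div
    ((h.measurable_condVar' i).mul
      (((h.measurable_remainingVar T le_rfl).le (ℱ.le i)).pow_const s))
    ((h.measurable_remainingVar T (Nat.le_succ i)).le (ℱ.le i))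
    ((h.measurable_partialSum' k).const_sub y)
    (mul_rpow_remainingVar_nonneg h.condVar_nonneg hT hi s)
    (mul_rpow_remainingVar_le h.condVar_nonneg hT hi hs)
    fun ω ↦ zero_le_one.trans (one_le_remainingVar h.condVar_nonneg hT hi.le ω)

lemma integral_stepWeight_mul_condVar_le (h : IsMartingaleDifference μ ℱ X q) (hp : 0 ≤ p)
    (hT : ∀ ω, partialSum q n ω ≤ T) (hi : i < n) (y : ℝ) :
    ∫ ω, stepWeight p (remainingVar q T (i + 1) ω)
        ((y - partialSum X i ω) / √(remainingVar q T (i + 1) ω)) * q i ω ∂μ ≤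
      4 * ∫ ω, q i ω * remainingVar q T (i + 1) ω ^ (-((3 + 1 / p) / 2))
        / (1 + (y - partialSum X n ω) ^ 2 / remainingVar q T i ω) ∂μ := by
  have hs : -((3 + 1 / p) / 2) ≤ 0 := neg_nonpos.2 (by positivity)
  have hq := h.condVar_nonneg
  have hr := h.measurable_remainingVar T (le_refl (i + 1))
  have hr1 := one_le_remainingVar hq hT (Nat.succ_le_of_lt hi)
  have hS := h.measurable_partialSum (le_refl i)
  have hweight : Measurable[ℱ i] fun ω ↦ stepWeight p (remainingVar q T (i + 1) ω)
      ((y - partialSum X i ω) / √(remainingVar q T (i + 1) ω)) :=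
    measurable_stepWeight (by fun_prop) hr
  refine (integral_mono
    ((h.integrable_condVar i).bdd_mul (hweight.le (ℱ.le i)).aestronglyMeasurable
      (ae_of_all _ fun ω ↦ abs_stepWeight_le_one hp (hr1 ω) _))
    (h.integrable_mul_rpow_remainingVar_div hs hT hi i y) fun ω ↦ ?_).trans
    (h.integral_div_one_add_sq_le hi.le y
      ((h.measurable_condVar i).mul (hr.pow_const _)) (h.measurable_remainingVar T (Nat.le_succ i))
      (mul_rpow_remainingVar_nonneg hq hT hi _) (mul_rpow_remainingVar_le hq hT hi hs)
      (one_le_remainingVar hq hT hi.le) fun ω ↦ ?_)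
  · have hle := mul_le_mul_of_nonneg_right (stepWeight_div_sqrt_le (p := p)
      (zero_lt_one.trans_le (hr1 ω)) (hq i ω) (y - partialSum X i ω)) (hq i ω)
    rw [remainingVar_succ_add, div_mul_eq_mul_div, mul_comm (_ ^ _)] at hle
    exact hle
  · rw [remainingVar]
    linarith [hT ω]

lemma sum_integral_mul_rpow_remainingVar_div_le (h : IsMartingaleDifference μ ℱ X q) (hp : 1 ≤ p)
    (hX : ∀ i < n, Integrable (fun ω ↦ |X i ω| ^ (2 * p)) μ)
    (hT : ∀ ω, partialSum q n ω ≤ T) (y : ℝ) :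
    ∑ i ∈ range n, ∫ ω, q i ω * remainingVar q T (i + 1) ω ^ (-((3 + 1 / p) / 2))
        / (1 + (y - partialSum X n ω) ^ 2 / remainingVar q T i ω) ∂μ ≤
      32 * p * ∫ ω, decayKernel (1 / (4 * p)) (y - partialSum X n ω) ∂μ
        + ∑ i ∈ range n, ∫ ω, |X i ω| ^ (2 * p) ∂μ := by
  have hs : -((3 + 1 / p) / 2) ≤ 0 := neg_nonpos.2 (by positivity)
  have hkernel := (integrable_decayKernel (μ := μ) (b := 1 / (4 * p)) (by positivity)
    ((h.measurable_partialSum' n).const_sub y)).const_mul (32 * p)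
  have hqp := integrable_finsetSum (range n) fun i hi ↦
    h.integrable_condVar_rpow hp (hX i (mem_range.1 hi))
  have hpoint (ω : Ω) :
      ∑ i ∈ range n, q i ω * remainingVar q T (i + 1) ω ^ (-((3 + 1 / p) / 2))
        / (1 + (y - partialSum X n ω) ^ 2 / remainingVar q T i ω) ≤
      32 * p * decayKernel (1 / (4 * p)) (y - partialSum X n ω)
        + ∑ i ∈ range n, q i ω ^ p := by
    have hle := sum_mul_rpow_div_one_add_le hp (b := 1 / (4 * p)) (by positivity)
      (one_div_le_one_div_of_le (by norm_num) (by linarith))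
      (remainingVar_succ_add q T · ω)
      (fun i hi ↦ one_le_remainingVar h.condVar_nonneg hT hi ω) (h.condVar_nonneg · ω)
      (y - partialSum X n ω)
    have hexp : 4 * (1 / (4 * p)) = 1 / p := by field_simp
    have hconst : 8 / (1 / (4 * p)) = 32 * p := by field_simp; norm_num
    rwa [hexp, hconst] at hle
  rw [← integral_finsetSum _ fun i hi ↦
    h.integrable_mul_rpow_remainingVar_div hs hT (mem_range.1 hi) n y]
  refine (integral_mono (integrable_finsetSum _ fun i hi ↦
    h.integrable_mul_rpow_remainingVar_div hs hT (mem_range.1 hi) n y)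
    (hkernel.add hqp) hpoint).trans ?_
  rw [integral_add' hkernel hqp, integral_const_mul, integral_finsetSum _ fun i hi ↦
    h.integrable_condVar_rpow hp (hX i (mem_range.1 hi))]
  exact add_le_add le_rfl (sum_le_sum fun i hi ↦
    h.integral_condVar_rpow_le hp (hX i (mem_range.1 hi)))

end FiniteMeasure

lemma abs_integral_stdNormalCDF_partialSum_sub_le [IsProbabilityMeasure μ]
    (h : IsMartingaleDifference μ ℱ X q) (hp : 1 ≤ p) (hη : 0 < η)
    (hX : ∀ i < n, Integrable (fun ω ↦ |X i ω| ^ (2 * p)) μ)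
    (hT : ∀ ω, partialSum q n ω ≤ T) (y : ℝ) :
    |∫ ω, Φ ((y - partialSum X n ω) / √(remainingVar q T n ω)) ∂μ - Φ (y / √(1 + T))| ≤
      256 * p * η * ∫ ω, decayKernel (1 / (4 * p)) (y - partialSum X n ω) ∂μ
        + (8 * η + 2 * lindebergConst p η) * ∑ i ∈ range n, ∫ ω, |X i ω| ^ (2 * p) ∂μ := by
  set Ψ : ℕ → ℝ := fun k ↦
    ∫ ω, Φ ((y - partialSum X k ω) / √(remainingVar q T k ω)) ∂μ with hΨ
  have hΨ0 : Ψ 0 = Φ (y / √(1 + T)) := by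
    simp only [hΨ, partialSum_zero, remainingVar_zero, sub_zero, integral_const, probReal_univ,
      one_smul]
  have hstep : ∀ i ∈ range n, |Ψ (i + 1) - Ψ i| ≤
      8 * η * ∫ ω, q i ω * remainingVar q T (i + 1) ω ^ (-((3 + 1 / p) / 2))
          / (1 + (y - partialSum X n ω) ^ 2 / remainingVar q T i ω) ∂μ
        + 2 * lindebergConst p η * ∫ ω, |X i ω| ^ (2 * p) ∂μ := by
    intro i hi
    have hi := mem_range.1 hi
    refine (h.abs_integral_stdNormalCDF_succ_sub_le hp hη (hX i hi) hT hi y).trans ?_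
    have := mul_le_mul_of_nonneg_left
      (h.integral_stepWeight_mul_condVar_le (p := p) (by linarith) hT hi y)
      (by positivity : 0 ≤ 2 * η)
    linarith
  have hsum := h.sum_integral_mul_rpow_remainingVar_div_le hp hX hT y
  rw [← hΨ0]
  change |Ψ n - Ψ 0| ≤ _
  rw [← sum_range_sub Ψ n]
  refine (abs_sum_le_sum_abs _ _).trans ((sum_le_sum hstep).trans ?_)
  rw [sum_add_distrib, ← mul_sum, ← mul_sum]
  nlinarith [mul_le_mul_of_nonneg_left hsum (by positivity : 0 ≤ 8 * η)]

end IsMartingaleDifference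

end Lindeberg

/-! ### Smoothing and the Kolmogorov distance -/

section KolmogorovDist

variable {Ω : Type*} {mΩ : MeasurableSpace Ω} {μ : Measure Ω} {S : Ω → ℝ}

/-- The Kolmogorov distance between the law of `S` and the standard normal distribution. -/
noncomputable def kolmogorovDist (μ : Measure Ω) (S : Ω → ℝ) : ℝ :=
  ⨆ y : ℝ, |μ.real {ω | S ω ≤ y} - Φ y|

section Probability

variable [IsProbabilityMeasure μ]

lemma abs_measureReal_sub_stdNormalCDF_le (S : Ω → ℝ) (y : ℝ) :
    |μ.real {ω | S ω ≤ y} - Φ y| ≤ kolmogorovDist μ S := by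
  refine le_ciSup (f := fun y ↦ |μ.real {ω | S ω ≤ y} - Φ y|) ⟨1, ?_⟩ y
  rintro _ ⟨y, rfl⟩
  exact abs_sub_le_of_le_of_le measureReal_nonneg measureReal_le_one (stdNormalCDF_nonneg y)
    (stdNormalCDF_le_one y) |>.trans (by norm_num)

lemma kolmogorovDist_nonneg (S : Ω → ℝ) : 0 ≤ kolmogorovDist μ S :=
  (abs_nonneg _).trans (abs_measureReal_sub_stdNormalCDF_le S 0)

lemma measureReal_mem_Icc_le (hS : Measurable S) {a b : ℝ} (hab : a ≤ b) :
    μ.real {ω | S ω ∈ Set.Icc a b} ≤ b - a + 2 * kolmogorovDist μ S := by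
  refine le_of_forall_pos_le_add fun δ hδ ↦ ?_
  have hsub : {ω | S ω ∈ Set.Icc a b} ⊆ {ω | S ω ≤ b} \ {ω | S ω ≤ a - δ} :=
    fun ω (hω : a ≤ S ω ∧ S ω ≤ b) ↦ ⟨hω.2, fun (h : S ω ≤ a - δ) ↦ by linarith [hω.1]⟩
  have hdiff : μ.real ({ω | S ω ≤ b} \ {ω | S ω ≤ a - δ}) =
      μ.real {ω | S ω ≤ b} - μ.real {ω | S ω ≤ a - δ} :=
    measureReal_sdiff (fun ω (hω : S ω ≤ a - δ) ↦ hω.trans (by linarith))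
      (measurableSet_le hS measurable_const)
  have hb := abs_le.1 (abs_measureReal_sub_stdNormalCDF_le (μ := μ) S b)
  have ha := abs_le.1 (abs_measureReal_sub_stdNormalCDF_le (μ := μ) S (a - δ))
  have hlip := abs_le.1 (abs_stdNormalCDF_sub_le (a - δ) b)
  rw [abs_of_nonneg (by linarith)] at hlip
  have := measureReal_mono (μ := μ) hsub
  linarith

lemma lintegral_comp_le_of_superlevel_eq_Icc (hS : Measurable S) {f : ℝ → ℝ} (hf : Measurable f)
    (hf0 : ∀ s, 0 ≤ f s) (hf1 : ∀ s, f s ≤ 1)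
    (hlevel : ∀ t ∈ Set.Ioc (0 : ℝ) 1, ∃ a b, a ≤ b ∧ {s | t ≤ f s} = Set.Icc a b) :
    ∫⁻ ω, ENNReal.ofReal (f (S ω)) ∂μ ≤
      (∫⁻ s, ENNReal.ofReal (f s)) + ENNReal.ofReal (2 * kolmogorovDist μ S) := by
  rw [lintegral_eq_lintegral_meas_le μ (ae_of_all _ fun ω ↦ hf0 (S ω)) (hf.comp hS).aemeasurable,
    lintegral_eq_lintegral_meas_le volume (ae_of_all _ hf0) hf.aemeasurable]
  set D := ENNReal.ofReal (2 * kolmogorovDist μ S)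
  have hle : ∀ t ∈ Set.Ioi (0 : ℝ), μ {ω | t ≤ f (S ω)} ≤
      volume {s | t ≤ f s} + (Set.Iic 1).indicator (fun _ ↦ D) t := by
    intro t (ht : 0 < t)
    by_cases ht1 : t ≤ 1
    · obtain ⟨a, b, hab, hIcc⟩ := hlevel t ⟨ht, ht1⟩
      have hpre : {ω | t ≤ f (S ω)} = {ω | S ω ∈ Set.Icc a b} := by rw [← hIcc]; rfl
      have := kolmogorovDist_nonneg (μ := μ) S
      rw [Set.indicator_of_mem (Set.mem_Iic.2 ht1), hIcc, hpre, Real.volume_Icc,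
        ← ENNReal.ofReal_add (by linarith) (by positivity), ← ofReal_measureReal]
      exact ENNReal.ofReal_le_ofReal (measureReal_mem_Icc_le hS hab)
    · have hempty : {ω | t ≤ f (S ω)} = ∅ :=
        Set.eq_empty_of_forall_notMem fun ω hω ↦ ht1 (le_trans hω (hf1 _))
      rw [hempty, measure_empty]
      exact zero_le
  refine (setLIntegral_mono' measurableSet_Ioi hle).trans (le_of_eq ?_)
  rw [lintegral_add_right _ (measurable_const.indicator measurableSet_Iic),
    setLIntegral_indicator measurableSet_Iic, setLIntegral_const, Set.inter_comm,
    Set.Ioi_inter_Iic, Real.volume_Ioc, sub_zero, ENNReal.ofReal_one, mul_one]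

end Probability

variable {b l : ℝ}

lemma integrable_decayKernel_volume (hb : 0 < b) : Integrable (decayKernel b) := by
  have hint := integrable_rpow_neg_one_add_norm_sq (E := ℝ) (μ := volume) (r := 1 + 2 * b)
    (by rw [Module.finrank_self, Nat.cast_one]; linarith)
  refine hint.congr (ae_of_all _ fun w ↦ ?_)
  simp only [decayKernel, Real.norm_eq_abs, sq_abs]
  congr 1
  ring

lemma setOf_le_decayKernel_div (hb : 0 ≤ b) (hl : 0 < l) (y : ℝ) {t : ℝ}
    (ht : t ∈ Set.Ioc (0 : ℝ) 1) : ∃ a c, a ≤ c ∧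
      {s | t ≤ decayKernel b ((y - s) / l)} = Set.Icc a c := by
  set ρ := l * √(t ^ (-(1 / 2 + b))⁻¹ - 1)
  have hroot : 0 ≤ t ^ (-(1 / 2 + b))⁻¹ - 1 := sub_nonneg.2
    (Real.one_le_rpow_of_pos_of_le_one_of_nonpos ht.1 ht.2 (inv_nonpos.2 (by linarith)))
  have hρ : 0 ≤ ρ := by positivity
  refine ⟨y - ρ, y + ρ, by linarith, Set.ext fun s ↦ ?_⟩
  calc t ≤ decayKernel b ((y - s) / l)
      ↔ 1 + ((y - s) / l) ^ 2 ≤ t ^ (-(1 / 2 + b))⁻¹ := by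
        rw [decayKernel, Real.le_rpow_inv_iff_of_neg (by positivity) ht.1 (by linarith)]
    _ ↔ |(y - s) / l| ≤ √(t ^ (-(1 / 2 + b))⁻¹ - 1) := by
        rw [← Real.sqrt_sq_eq_abs, Real.sqrt_le_sqrt_iff hroot, le_sub_iff_add_le']
    _ ↔ |y - s| ≤ ρ := by
        rw [abs_div, abs_of_pos hl, div_le_iff₀' hl]
    _ ↔ s ∈ Set.Icc (y - ρ) (y + ρ) := by
        rw [abs_le, Set.mem_Icc]
        constructor <;> rintro ⟨h₁, h₂⟩ <;> constructor <;> linarith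

lemma integral_decayKernel_div_le [IsProbabilityMeasure μ] (hS : Measurable S) (hb : 0 < b)
    (hl : 0 < l) (y : ℝ) : ∫ ω, decayKernel b ((y - S ω) / l) ∂μ ≤
      l * (∫ w, decayKernel b w) + 2 * kolmogorovDist μ S := by
  have hD := kolmogorovDist_nonneg (μ := μ) S
  have hk := measurable_decayKernel b
  have hmass : 0 ≤ ∫ w, decayKernel b w := integral_nonneg (decayKernel_nonneg b)
  have hle := lintegral_comp_le_of_superlevel_eq_Icc (μ := μ) hS
    (f := fun s ↦ decayKernel b ((y - s) / l)) (by fun_prop) (fun s ↦ decayKernel_nonneg _ _)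
    (fun s ↦ decayKernel_le_one hb.le _) fun t ht ↦ setOf_le_decayKernel_div hb.le hl y ht
  have hvol : ∫ s, decayKernel b ((y - s) / l) = l * ∫ w, decayKernel b w := by
    rw [integral_sub_left_eq_self (fun s ↦ decayKernel b (s / l)), Measure.integral_comp_div,
      abs_of_pos hl, smul_eq_mul]
  rw [← ofReal_integral_eq_lintegral_ofReal
      (integrable_decayKernel hb.le ((hS.const_sub y).div_const l))
      (ae_of_all _ fun ω ↦ decayKernel_nonneg _ _),
    ← ofReal_integral_eq_lintegral_ofReal
      (((integrable_decayKernel_volume hb).comp_div hl.ne').comp_sub_left y)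
      (ae_of_all _ fun s ↦ decayKernel_nonneg _ _), hvol,
    ← ENNReal.ofReal_add (by positivity) (by positivity)] at hle
  exact (ENNReal.ofReal_le_ofReal_iff (by positivity)).1 hle

section Smoothing

variable {γ : Measure ℝ} [IsProbabilityMeasure γ] {G F : ℝ → ℝ} {D Δ : ℝ}

lemma integrable_comp_sub_mul {H : ℝ → ℝ} (hH : Measurable H) (hD : ∀ y, |H y| ≤ D) (y l : ℝ) :
    Integrable (fun z ↦ H (y - l * z)) γ :=
  Integrable.of_bound (hH.comp (by fun_prop)).aestronglyMeasurable D (ae_of_all _ fun _ ↦ hD _)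

/- Shift by `4 * l`: where `z ≤ 4`, monotonicity of `G` propagates the value of `G - F` at `y₀`;
the part `4 < z` has small probability by Chebyshev's inequality. -/
lemma sub_sub_le_of_monotone_of_abs_sub_le (hG : Monotone G)
    (hF : ∀ a c, |F c - F a| ≤ |c - a|) (hD : ∀ y, |G y - F y| ≤ D) (hl : 0 < l) (y₀ z : ℝ) :
    G y₀ - F y₀ - (l * (5 + z ^ 2) + D / 8 * z ^ 2) ≤
      G (y₀ + 4 * l - l * z) - F (y₀ + 4 * l - l * z) := by
  have hD0 : 0 ≤ D := (abs_nonneg _).trans (hD 0)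
  rcases le_or_gt z 4 with hz | hz
  · have hlz : 0 ≤ l * (4 - z) := mul_nonneg hl.le (by linarith)
    have hmono : G y₀ ≤ G (y₀ + 4 * l - l * z) := hG (by linarith)
    have hlip := abs_le.1 (hF y₀ (y₀ + 4 * l - l * z))
    rw [show y₀ + 4 * l - l * z - y₀ = l * (4 - z) by ring, abs_of_nonneg hlz] at hlip
    have : l * (4 - z) ≤ l * (5 + z ^ 2) := by
      gcongr
      nlinarith [sq_nonneg (z + 1)]
    have : 0 ≤ D / 8 * z ^ 2 := by positivity
    linarith
  · have hz2 : 16 ≤ z ^ 2 := by nlinarith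
    have : 2 * D ≤ D / 8 * z ^ 2 := by nlinarith
    have : 0 ≤ l * (5 + z ^ 2) := by positivity
    linarith [(abs_le.1 (hD y₀)).2, (abs_le.1 (hD (y₀ + 4 * l - l * z))).1]

lemma sub_le_of_integral_le (hG : Monotone G) (hF : ∀ a c, |F c - F a| ≤ |c - a|)
    (hFm : Measurable F) (hD : ∀ y, |G y - F y| ≤ D) (hl : 0 < l)
    (hγ : Integrable (fun z ↦ z ^ 2) γ) (hγ1 : ∫ z, z ^ 2 ∂γ = 1)
    (hΔ : ∀ y, ∫ z, (G (y - l * z) - F (y - l * z)) ∂γ ≤ Δ) (y₀ : ℝ) :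
    G y₀ - F y₀ ≤ Δ + 6 * l + D / 8 := by
  have hquad : Integrable (fun z ↦ l * (5 + z ^ 2)) γ := ((integrable_const 5).add hγ).const_mul l
  have herr : Integrable (fun z ↦ l * (5 + z ^ 2) + D / 8 * z ^ 2) γ :=
    hquad.add (hγ.const_mul (D / 8))
  have herr_integral : ∫ z, (l * (5 + z ^ 2) + D / 8 * z ^ 2) ∂γ = 6 * l + D / 8 := by
    rw [integral_add hquad (hγ.const_mul _), integral_const_mul, integral_const_mul,
      integral_add (integrable_const _) hγ, hγ1, integral_const, probReal_univ, one_smul]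
    ring
  have hmono := integral_mono (μ := γ) ((integrable_const (G y₀ - F y₀)).sub herr)
    (integrable_comp_sub_mul (H := fun y ↦ G y - F y) (hG.measurable.sub hFm) hD (y₀ + 4 * l) l)
    (sub_sub_le_of_monotone_of_abs_sub_le hG hF hD hl y₀)
  rw [integral_sub' (integrable_const _) herr, herr_integral, integral_const, probReal_univ,
    one_smul] at hmono
  linarith [hΔ (y₀ + 4 * l)]

lemma abs_sub_le_of_abs_integral_le (hG : Monotone G) (hF : ∀ a c, |F c - F a| ≤ |c - a|)
    (hFm : Measurable F) (hD : ∀ y, |G y - F y| ≤ D) (hl : 0 < l)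
    (hγ : Integrable (fun z ↦ z ^ 2) γ) (hγ1 : ∫ z, z ^ 2 ∂γ = 1)
    (hΔ : ∀ y, |∫ z, (G (y - l * z) - F (y - l * z)) ∂γ| ≤ Δ) (y₀ : ℝ) :
    |G y₀ - F y₀| ≤ Δ + 6 * l + D / 8 := by
  refine abs_le'.2 ⟨sub_le_of_integral_le hG hF hFm hD hl hγ hγ1
    (fun y ↦ (le_abs_self _).trans (hΔ y)) y₀, ?_⟩
  have hneg : MeasurableEmbedding (fun z : ℝ ↦ -z) := (MeasurableEquiv.neg ℝ).measurableEmbedding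
  have : IsProbabilityMeasure (γ.map fun z ↦ -z) :=
    Measure.isProbabilityMeasure_map measurable_neg.aemeasurable
  have hreflect := sub_le_of_integral_le (γ := γ.map fun z ↦ -z) (G := fun y ↦ -G (-y))
    (F := fun y ↦ -F (-y)) (D := D) (Δ := Δ) (l := l)
    (fun a c hac ↦ neg_le_neg (hG (neg_le_neg hac)))
    (fun a c ↦ by simpa only [neg_sub_neg] using hF (-c) (-a)) (by fun_prop)
    (fun y ↦ by simpa only [neg_sub_neg, abs_sub_comm] using hD (-y)) hl
    (hneg.integrable_map_iff.2 (by simpa only [Function.comp_def, neg_sq] using hγ))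
    (by simpa only [hneg.integral_map, neg_sq] using hγ1)
    (fun y ↦ by
      have := (neg_le_abs _).trans (hΔ (-y))
      rw [hneg.integral_map]
      rw [← integral_neg] at this
      simpa only [neg_sub_neg, neg_sub, mul_neg, sub_neg_eq_add, neg_add_rev, sub_eq_add_neg,
        neg_neg, add_comm] using this) (-y₀)
  simpa only [neg_neg, neg_sub_neg, neg_sub] using hreflect

end Smoothing

section GaussianSmoothing

lemma integrable_sq_gaussianReal : Integrable (fun z ↦ z ^ 2) (gaussianReal 0 1) :=
  (ProbabilityTheory.memLp_id_gaussianReal (μ := 0) (v := 1) 2).integrable_sq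

lemma integral_sq_gaussianReal : ∫ z, z ^ 2 ∂gaussianReal 0 1 = 1 := by
  simpa [ProbabilityTheory.variance_eq_integral measurable_id.aemeasurable,
    ProbabilityTheory.integral_id_gaussianReal]
    using ProbabilityTheory.variance_id_gaussianReal (μ := 0) (v := 1)

lemma integral_stdNormalCDF_sub_div [IsFiniteMeasure μ] (hS : Measurable S) (hl : 0 < l) (y : ℝ) :
    ∫ ω, Φ ((y - S ω) / l) ∂μ = ∫ z, μ.real {ω | S ω ≤ y - l * z} ∂gaussianReal 0 1 := by
  set A : Set (Ω × ℝ) := {w | S w.1 ≤ y - l * w.2}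
  have hA : MeasurableSet A := measurableSet_le (hS.comp measurable_fst) (by fun_prop)
  have hΩ (z : ℝ) : ∫ ω, A.indicator (fun _ ↦ (1 : ℝ)) (ω, z) ∂μ =
      μ.real {ω | S ω ≤ y - l * z} :=
    integral_indicator_one (s := {ω | S ω ≤ y - l * z}) (measurableSet_le hS measurable_const)
  have hℝ (ω : Ω) : ∫ z, A.indicator (fun _ ↦ (1 : ℝ)) (ω, z) ∂gaussianReal 0 1 =
      Φ ((y - S ω) / l) := by
    have hslice : {z | S ω ≤ y - l * z} = Set.Iic ((y - S ω) / l) := by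
      ext z
      rw [Set.mem_Iic, le_div_iff₀' hl, le_sub_comm]
      rfl
    rw [stdNormalCDF_eq_measureReal, ← hslice]
    exact integral_indicator_one (s := {z | S ω ≤ y - l * z})
      (measurableSet_le measurable_const (by fun_prop))
  simp_rw [← hΩ, ← hℝ]
  exact integral_integral_swap (f := fun ω z ↦ A.indicator (fun _ ↦ (1 : ℝ)) (ω, z))
    ((integrable_const (1 : ℝ)).indicator hA)

lemma abs_integral_stdNormalCDF_sub_mul_sub_le (hl : 0 < l) (y : ℝ) :
    |∫ z, (Φ (y - l * z) - Φ y) ∂gaussianReal 0 1| ≤ l := by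
  have hquad : Integrable (fun z : ℝ ↦ l / 2 * (1 + z ^ 2)) (gaussianReal 0 1) :=
    ((integrable_const 1).add integrable_sq_gaussianReal).const_mul _
  calc |∫ z, (Φ (y - l * z) - Φ y) ∂gaussianReal 0 1|
      ≤ ∫ z, l / 2 * (1 + z ^ 2) ∂gaussianReal 0 1 := by
        rw [← Real.norm_eq_abs]
        refine norm_integral_le_of_norm_le hquad (ae_of_all _ fun z ↦ ?_)
        have hlip := abs_stdNormalCDF_sub_le y (y - l * z)
        rw [sub_sub_cancel_left, abs_neg, abs_mul, abs_of_pos hl] at hlip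
        rw [Real.norm_eq_abs]
        nlinarith [mul_nonneg hl.le (sq_nonneg (|z| - 1)), sq_abs z]
    _ = l := by
        rw [integral_const_mul, integral_add (integrable_const 1) integrable_sq_gaussianReal,
          integral_sq_gaussianReal, integral_const, probReal_univ, one_smul]
        ring

lemma kolmogorovDist_le_of_smoothed [IsProbabilityMeasure μ] (hS : Measurable S) (hl : 0 < l)
    {Δ : ℝ} (hΔ : ∀ y, |∫ ω, Φ ((y - S ω) / l) ∂μ - Φ y| ≤ Δ) :
    kolmogorovDist μ S ≤ Δ + 7 * l + kolmogorovDist μ S / 8 := by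
  have hG : Monotone fun y ↦ μ.real {ω | S ω ≤ y} :=
    fun a c hac ↦ measureReal_mono fun ω (hω : S ω ≤ a) ↦ hω.trans hac
  have hΦm : Measurable Φ := continuous_stdNormalCDF.measurable
  refine ciSup_le fun y₀ ↦ (abs_sub_le_of_abs_integral_le (Δ := Δ + l) hG abs_stdNormalCDF_sub_le
    hΦm (abs_measureReal_sub_stdNormalCDF_le S) hl integrable_sq_gaussianReal
    integral_sq_gaussianReal (fun y ↦ ?_) y₀).trans_eq (by ring)
  have hGint := integrable_comp_sub_mul (γ := gaussianReal 0 1) (D := 1) hG.measurable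
    (fun y ↦ by rw [abs_of_nonneg measureReal_nonneg]; exact measureReal_le_one) y l
  have hΦint := integrable_stdNormalCDF_comp (μ := gaussianReal 0 1) (f := fun z ↦ y - l * z)
    (by fun_prop)
  have hsmooth := abs_integral_stdNormalCDF_sub_mul_sub_le hl y
  rw [integral_sub hΦint (integrable_const _), integral_const, probReal_univ, one_smul] at hsmooth
  rw [integral_sub hGint hΦint, ← integral_stdNormalCDF_sub_div hS hl]
  exact (abs_sub_le _ (Φ y) _).trans (add_le_add (hΔ y) (by rwa [abs_sub_comm]))

end GaussianSmoothing

end KolmogorovDist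

/-! ### Stopping at the target variance -/

section Stopping

variable {Ω : Type*} {mΩ : MeasurableSpace Ω} {μ : Measure Ω} {ℱ : Filtration ℕ mΩ}
  {X q Y : ℕ → Ω → ℝ} {n : ℕ} {T : ℝ}

/-- The increments `Y` killed from the first index at which the partial sums of `q` exceed `T`. -/
noncomputable def stoppedDiff (q : ℕ → Ω → ℝ) (T : ℝ) (Y : ℕ → Ω → ℝ) (j : ℕ) : Ω → ℝ :=
  {ω | partialSum q (j + 1) ω ≤ T}.indicator (Y j)

lemma partialSum_stoppedDiff_self_le (hT : 0 ≤ T) (n : ℕ) (hq : ∀ i ω, 0 ≤ q i ω) (ω : Ω) :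
    partialSum (stoppedDiff q T q) n ω ≤ T := by
  induction n with
  | zero => rwa [partialSum_zero]
  | succ n ih =>
    by_cases hω : partialSum q (n + 1) ω ≤ T
    · exact (sum_le_sum fun j _ ↦ Set.indicator_le_self' (fun _ _ ↦ hq j ω) ω).trans hω
    · rwa [partialSum_succ, stoppedDiff,
        Set.indicator_of_notMem (s := {ω | partialSum q (n + 1) ω ≤ T}) hω, add_zero]

lemma partialSum_stoppedDiff_of_le (hq : ∀ i ω, 0 ≤ q i ω) {ω : Ω} (hω : partialSum q n ω ≤ T)
    (Y : ℕ → Ω → ℝ) : partialSum (stoppedDiff q T Y) n ω = partialSum Y n ω :=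
  sum_congr rfl fun _ hj ↦
    Set.indicator_of_mem (s := {ω | partialSum q _ ω ≤ T})
      ((partialSum_mono hq ω (mem_range.1 hj)).trans hω) _

namespace IsMartingaleDifference

variable [IsFiniteMeasure μ]

lemma mul (h : IsMartingaleDifference μ ℱ X q) {W : ℕ → Ω → ℝ} {c : ℝ}
    (hW : ∀ i, Measurable[ℱ i] (W i)) (hc : ∀ i ω, |W i ω| ≤ c) :
    IsMartingaleDifference μ ℱ (fun i ω ↦ W i ω * X i ω) fun i ω ↦ W i ω ^ 2 * q i ω where
  measurable_succ i := ((hW i).le (ℱ.mono i.le_succ)).mul (h.measurable_succ i)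
  measurable_condVar i := ((hW i).pow_const 2).mul (h.measurable_condVar i)
  condVar_nonneg i ω := mul_nonneg (sq_nonneg _) (h.condVar_nonneg i ω)
  memLp i := (h.memLp i).of_le_mul (c := c)
    (((hW i).le (ℱ.le i)).mul (h.measurable i)).aestronglyMeasurable
    (ae_of_all _ fun ω ↦ by rw [norm_mul]; gcongr; exact hc i ω)
  condExp_eq_zero i := by
    filter_upwards [condExp_stronglyMeasurable_mul_of_bound (ℱ.le i) (hW i).stronglyMeasurable
      (h.integrable i) c (ae_of_all _ (hc i)), h.condExp_eq_zero i] with ω hω hω0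
    rw [Pi.mul_apply, hω0, Pi.zero_apply, mul_zero] at hω
    exact hω
  condExp_sq i := by
    simp only [mul_pow]
    exact h.condExp_mul_sq ((hW i).pow_const 2) (c := c ^ 2)
      fun ω ↦ by rw [abs_pow]; gcongr; exact hc i ω

lemma stopped (h : IsMartingaleDifference μ ℱ X q) (T : ℝ) :
    IsMartingaleDifference μ ℱ (stoppedDiff q T X) (stoppedDiff q T q) := by
  have hset (i : ℕ) : MeasurableSet[ℱ i] {ω | partialSum q (i + 1) ω ≤ T} :=
    measurableSet_le (h.measurable_partialSum_condVar le_rfl) measurable_const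
  have hW (i : ℕ) : Measurable[ℱ i]
      ({ω | partialSum q (i + 1) ω ≤ T}.indicator fun _ ↦ (1 : ℝ)) :=
    measurable_const.indicator (hset i)
  convert h.mul (c := 1) hW (fun i ω ↦ by rw [Set.indicator_apply]; split_ifs <;> simp)
    using 3 with i ω i ω <;>
  · rw [stoppedDiff, Set.indicator_apply, Set.indicator_apply]
    split_ifs <;> simp

/- The differences `X i / ε` have conditional variances `q i / ε ^ 2`. -/
lemma abs_integral_stdNormalCDF_div_sqrt_sq_add_sub_le [IsProbabilityMeasure μ]
    (h : IsMartingaleDifference μ ℱ X q) {p η ε : ℝ} (hp : 1 ≤ p) (hη : 0 < η) (hε : 0 < ε)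
    (hX : ∀ i < n, Integrable (fun ω ↦ |X i ω| ^ (2 * p)) μ)
    (hT : ∀ ω, partialSum q n ω ≤ T) (y : ℝ) :
    |∫ ω, Φ ((y - partialSum X n ω) / √(ε ^ 2 + (T - partialSum q n ω))) ∂μ
        - Φ (y / √(ε ^ 2 + T))| ≤
      256 * p * η * ∫ ω, decayKernel (1 / (4 * p)) ((y - partialSum X n ω) / ε) ∂μ
        + (8 * η + 2 * lindebergConst p η)
          * ((∑ i ∈ range n, ∫ ω, |X i ω| ^ (2 * p) ∂μ) / ε ^ (2 * p)) := by
  have hscale := h.mul (W := fun _ _ ↦ ε⁻¹) (c := |ε⁻¹|) (fun _ ↦ measurable_const)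
    fun _ _ ↦ le_rfl
  have hS (ω : Ω) : partialSum (fun i ω ↦ ε⁻¹ * X i ω) n ω = partialSum X n ω / ε := by
    rw [partialSum, ← mul_sum, ← div_eq_inv_mul, partialSum]
  have hQ (ω : Ω) : partialSum (fun i ω ↦ ε⁻¹ ^ 2 * q i ω) n ω = partialSum q n ω / ε ^ 2 := by
    rw [partialSum, ← mul_sum, inv_pow, ← div_eq_inv_mul, partialSum]
  have hsqrt (a d : ℝ) : a / ε / √(1 + d / ε ^ 2) = a / √(ε ^ 2 + d) := by
    rw [show 1 + d / ε ^ 2 = (ε ^ 2 + d) / ε ^ 2 by field_simp, Real.sqrt_div', Real.sqrt_sq hε.le,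
      div_div_div_cancel_right₀ hε.ne']
    positivity
  have hmoment (i : ℕ) (ω : Ω) :
      |ε⁻¹ * X i ω| ^ (2 * p) = |X i ω| ^ (2 * p) / ε ^ (2 * p) := by
    rw [← div_eq_inv_mul, abs_div, abs_of_pos hε, Real.div_rpow (abs_nonneg _) hε.le]
  have hcore := hscale.abs_integral_stdNormalCDF_partialSum_sub_le (n := n) (T := T / ε ^ 2) hp hη
    (fun i hi ↦ by simpa only [hmoment] using (hX i hi).div_const _)
    (fun ω ↦ by rw [hQ]; gcongr; exact hT ω) (y / ε)
  simpa only [remainingVar, hS, hQ, hmoment, integral_div, ← sum_div, ← sub_div, add_sub_assoc,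
    hsqrt] using hcore

end IsMartingaleDifference

end Stopping

/-! ### The rate in the Kolmogorov distance -/

section Rate

lemma one_div_one_add_sq_le_decayKernel {b : ℝ} (hb : b ≤ 1 / 2) (u : ℝ) :
    1 / (1 + u ^ 2) ≤ decayKernel b u := by
  rw [one_div, ← Real.rpow_neg_one]
  exact Real.rpow_le_rpow_of_exponent_le (by nlinarith [sq_nonneg u]) (by linarith)

lemma abs_stdNormalCDF_div_sqrt_one_add_sub_le_self {c : ℝ} (hc : 0 ≤ c) (y : ℝ) :
    |Φ (y / √(1 + c)) - Φ y| ≤ c := by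
  have hroot : 1 ≤ √(1 + c) := Real.one_le_sqrt.2 (by linarith)
  have hroot' : √(1 + c) ≤ 1 + c := Real.sqrt_le_self_iff.2 (Or.inr (by linarith))
  have hscale := abs_stdNormalCDF_mul_sub_le (y / √(1 + c)) hroot
  rw [mul_div_cancel₀ _ (by linarith), abs_sub_comm] at hscale
  linarith

lemma abs_stdNormalCDF_div_sqrt_sq_add_sub_div_le {b ε d : ℝ} (hb : b ≤ 1 / 2) (hε : 0 < ε)
    (hd : 0 ≤ d) (hdε : d ≤ ε ^ 2) (a : ℝ) :
    |Φ (a / √(ε ^ 2 + d)) - Φ (a / ε)| ≤ 2 ^ 17 * (d / ε ^ 2) * decayKernel b (a / ε) := by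
  have hsqrt : a / √(ε ^ 2 + d) = a / ε / √(1 + d / ε ^ 2) := by
    rw [show 1 + d / ε ^ 2 = (ε ^ 2 + d) / ε ^ 2 by field_simp, Real.sqrt_div (by positivity),
      Real.sqrt_sq hε.le, div_div_div_cancel_right₀ hε.ne']
  rw [hsqrt]
  calc |Φ (a / ε / √(1 + d / ε ^ 2)) - Φ (a / ε)|
      ≤ 2 ^ 17 / (1 + (a / ε) ^ 2) * (d / ε ^ 2) :=
        abs_stdNormalCDF_div_sqrt_sub_le _ ⟨by positivity, div_le_one_of_le₀ hdε (by positivity)⟩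
    _ = 2 ^ 17 * (d / ε ^ 2) * (1 / (1 + (a / ε) ^ 2)) := by ring
    _ ≤ 2 ^ 17 * (d / ε ^ 2) * decayKernel b (a / ε) := by
        gcongr
        exact one_div_one_add_sq_le_decayKernel hb _

lemma div_rpow_mul_sq_le {p η ε M : ℝ} (hη : 0 < η) (hε : 0 < ε) (hM : M ≤ ε ^ (2 * p + 1)) :
    M / (η * ε ^ 2) ^ p ≤ η ^ (-p) * ε := by
  rw [Real.mul_rpow hη.le (sq_nonneg ε), ← Real.rpow_two, ← Real.rpow_mul hε.le,
    div_le_iff₀ (by positivity), Real.rpow_neg hη.le]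
  calc M ≤ ε ^ (2 * p + 1) := hM
    _ = (η ^ p)⁻¹ * ε * (η ^ p * ε ^ (2 * p)) := by
        rw [Real.rpow_add_one hε.ne']
        field_simp

variable {Ω : Type*} {mΩ : MeasurableSpace Ω} {μ : Measure Ω}

lemma measureReal_le_abs_le {Z : Ω → ℝ} {p κ : ℝ} (hp : 0 < p) (hκ : 0 < κ)
    (hZ : Integrable (fun ω ↦ |Z ω| ^ p) μ) :
    μ.real {ω | κ ≤ |Z ω|} ≤ (∫ ω, |Z ω| ^ p ∂μ) / κ ^ p := by
  have hmarkov := mul_meas_ge_le_integral_of_nonneg (μ := μ)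
    (ae_of_all _ fun ω ↦ Real.rpow_nonneg (abs_nonneg (Z ω)) p) hZ (κ ^ p)
  simp only [Real.rpow_le_rpow_iff hκ.le (abs_nonneg _) hp] at hmarkov
  rwa [le_div_iff₀' (by positivity)]

section KolmogorovDist

variable [IsProbabilityMeasure μ] {S S' : Ω → ℝ} {B : Set Ω}

lemma measureReal_setOf_le_le_add (hB : ∀ ω ∉ B, S ω = S' ω) (y : ℝ) :
    μ.real {ω | S ω ≤ y} ≤ μ.real {ω | S' ω ≤ y} + μ.real B := by
  refine (measureReal_mono fun ω (hω : S ω ≤ y) ↦ ?_).trans (measureReal_union_le _ B)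
  by_cases hωB : ω ∈ B
  · exact Or.inr hωB
  · exact Or.inl ((hB ω hωB).symm.trans_le hω)

lemma kolmogorovDist_le_add_measureReal (hB : ∀ ω ∉ B, S ω = S' ω) :
    kolmogorovDist μ S ≤ kolmogorovDist μ S' + μ.real B := by
  refine ciSup_le fun y ↦ (abs_sub_le _ (μ.real {ω | S' ω ≤ y}) _).trans ?_
  rw [add_comm]
  refine add_le_add (abs_measureReal_sub_stdNormalCDF_le S' y) (abs_le.2 ⟨?_, ?_⟩)
  · linarith [measureReal_setOf_le_le_add (μ := μ) (fun ω hω ↦ (hB ω hω).symm) y]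
  · linarith [measureReal_setOf_le_le_add (μ := μ) hB y]

end KolmogorovDist

section Terminal

variable {X q : ℕ → Ω → ℝ} {n : ℕ} {p η ε : ℝ}

lemma abs_stdNormalCDF_div_sqrt_terminal_sub_le {b : ℝ} (hq : ∀ i ω, 0 ≤ q i ω) (hp : 0 ≤ p)
    (hb : b ≤ 1 / 2) (hη : 0 < η) (hη2 : η ≤ 1 / 2) (hε : 0 < ε) (a : ℝ) (ω : Ω) :
    |Φ (a / √(ε ^ 2
          + (1 + η * ε ^ 2 - partialSum (stoppedDiff q (1 + η * ε ^ 2) q) n ω))) - Φ (a / ε)| ≤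
      2 ^ 18 * η * decayKernel b (a / ε) + |partialSum q n ω - 1| ^ p / (η * ε ^ 2) ^ p := by
  have hκ : 0 < η * ε ^ 2 := by positivity
  have hK := decayKernel_nonneg b (a / ε)
  have hrest := partialSum_stoppedDiff_self_le (T := 1 + η * ε ^ 2) (by positivity) n hq ω
  rcases le_or_gt |partialSum q n ω - 1| (η * ε ^ 2) with hgood | hbad
  · have hvar := abs_le.1 hgood
    have hτ : 1 + η * ε ^ 2 - partialSum q n ω ≤ 2 * η * ε ^ 2 := by linarith
    rw [partialSum_stoppedDiff_of_le hq (by linarith)] at hrest ⊢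
    calc |Φ (a / √(ε ^ 2 + (1 + η * ε ^ 2 - partialSum q n ω))) - Φ (a / ε)|
        ≤ 2 ^ 17 * ((1 + η * ε ^ 2 - partialSum q n ω) / ε ^ 2) * decayKernel b (a / ε) :=
          abs_stdNormalCDF_div_sqrt_sq_add_sub_div_le hb hε (by linarith) (by nlinarith) a
      _ ≤ 2 ^ 17 * (2 * η) * decayKernel b (a / ε) := by
          gcongr
          exact div_le_of_le_mul₀ (by positivity) (by positivity) hτ
      _ ≤ 2 ^ 18 * η * decayKernel b (a / ε) + |partialSum q n ω - 1| ^ p / (η * ε ^ 2) ^ p := by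
          have : 0 ≤ |partialSum q n ω - 1| ^ p / (η * ε ^ 2) ^ p := by positivity
          linarith
  · have hlarge : 1 ≤ |partialSum q n ω - 1| ^ p / (η * ε ^ 2) ^ p :=
      (one_le_div (by positivity)).2 (Real.rpow_le_rpow hκ.le hbad.le hp)
    have : 0 ≤ 2 ^ 18 * η * decayKernel b (a / ε) := by positivity
    linarith [abs_stdNormalCDF_sub_le_one (a / √(ε ^ 2
      + (1 + η * ε ^ 2 - partialSum (stoppedDiff q (1 + η * ε ^ 2) q) n ω))) (a / ε)]

end Terminal

namespace IsMartingaleDifference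

variable {ℱ : Filtration ℕ mΩ} {X q : ℕ → Ω → ℝ} {n : ℕ} {p η ε : ℝ} [IsProbabilityMeasure μ]

lemma abs_integral_stdNormalCDF_div_sqrt_terminal_sub_le (h : IsMartingaleDifference μ ℱ X q)
    (hp : 1 ≤ p) (hη : 0 < η) (hη2 : η ≤ 1 / 2) (hε : 0 < ε)
    (hq : Integrable (fun ω ↦ |partialSum q n ω - 1| ^ p) μ)
    (hvar : ∫ ω, |partialSum q n ω - 1| ^ p ∂μ ≤ ε ^ (2 * p + 1)) {Z : Ω → ℝ}
    (hZ : Measurable Z) :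
    |∫ ω, Φ (Z ω / √(ε ^ 2
          + (1 + η * ε ^ 2 - partialSum (stoppedDiff q (1 + η * ε ^ 2) q) n ω))) ∂μ
        - ∫ ω, Φ (Z ω / ε) ∂μ| ≤
      2 ^ 18 * η * ∫ ω, decayKernel (1 / (4 * p)) (Z ω / ε) ∂μ + η ^ (-p) * ε := by
  have hb : 1 / (4 * p) ≤ 1 / 2 := one_div_le_one_div_of_le two_pos (by linarith)
  have hkilled := (h.stopped (1 + η * ε ^ 2)).measurable_partialSum_condVar (i := n) (k := n)
    (by omega) |>.le (ℱ.le n)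
  have hK := integrable_decayKernel (μ := μ) (b := 1 / (4 * p)) (f := fun ω ↦ Z ω / ε)
    (by positivity) (by fun_prop)
  rw [← integral_sub (integrable_stdNormalCDF_comp (by fun_prop))
    (integrable_stdNormalCDF_comp (by fun_prop)), ← Real.norm_eq_abs]
  refine (norm_integral_le_of_norm_le ((hK.const_mul (2 ^ 18 * η)).add (hq.div_const _))
    (ae_of_all _ fun ω ↦ abs_stdNormalCDF_div_sqrt_terminal_sub_le h.condVar_nonneg (by linarith)
      hb hη hη2 hε (Z ω) ω)).trans ?_
  rw [integral_add' (hK.const_mul _) (hq.div_const _), integral_const_mul, integral_div]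
  gcongr
  exact div_rpow_mul_sq_le hη hε hvar

lemma abs_stoppedDiff_rpow_le {q Y : ℕ → Ω → ℝ} {r : ℝ} (hr : 0 ≤ r) (T : ℝ) (i : ℕ) (ω : Ω) :
    |stoppedDiff q T Y i ω| ^ r ≤ |Y i ω| ^ r :=
  Real.rpow_le_rpow (abs_nonneg _) (norm_indicator_le_norm_self (Y i) ω) hr

lemma integrable_abs_stoppedDiff_rpow (h : IsMartingaleDifference μ ℱ X q) {r : ℝ} (hr : 0 ≤ r)
    (T : ℝ) {i : ℕ} (hX : Integrable (fun ω ↦ |X i ω| ^ r) μ) :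
    Integrable (fun ω ↦ |stoppedDiff q T X i ω| ^ r) μ :=
  hX.mono' (((h.stopped T).measurable i).abs.pow_const r).aestronglyMeasurable
    (ae_of_all _ fun ω ↦ by
      rw [Real.norm_of_nonneg (by positivity)]
      exact abs_stoppedDiff_rpow_le hr T i ω)

lemma abs_integral_stdNormalCDF_stopped_sub_le (h : IsMartingaleDifference μ ℱ X q)
    (hp : 1 ≤ p) (hη : 0 < η) (hη2 : η ≤ 1 / 2) (hε : 0 < ε) (hε1 : ε ≤ 1)
    (hX : ∀ i < n, Integrable (fun ω ↦ |X i ω| ^ (2 * p)) μ)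
    (hq : Integrable (fun ω ↦ |partialSum q n ω - 1| ^ p) μ)
    (hmoment : ∑ i ∈ range n, ∫ ω, |X i ω| ^ (2 * p) ∂μ ≤ ε ^ (2 * p + 1))
    (hvar : ∫ ω, |partialSum q n ω - 1| ^ p ∂μ ≤ ε ^ (2 * p + 1)) (y : ℝ) :
    |∫ ω, Φ ((y - partialSum (stoppedDiff q (1 + η * ε ^ 2) X) n ω) / ε) ∂μ - Φ y| ≤
      (256 * p + 2 ^ 18) * η * ∫ ω, decayKernel (1 / (4 * p))
          ((y - partialSum (stoppedDiff q (1 + η * ε ^ 2) X) n ω) / ε) ∂μ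
        + (8 * η + 2 * lindebergConst p η + 2 + η ^ (-p)) * ε := by
  have hkilled := h.stopped (1 + η * ε ^ 2)
  have hXkilled (i : ℕ) (hi : i < n) :=
    h.integrable_abs_stoppedDiff_rpow (by linarith) (1 + η * ε ^ 2) (hX i hi)
  have hlind := hkilled.abs_integral_stdNormalCDF_div_sqrt_sq_add_sub_le hp hη hε hXkilled
    (partialSum_stoppedDiff_self_le (by positivity) n h.condVar_nonneg) y
  have hterminal := h.abs_integral_stdNormalCDF_div_sqrt_terminal_sub_le hp hη hη2 hε hq hvar
    (Z := fun ω ↦ y - partialSum (stoppedDiff q (1 + η * ε ^ 2) X) n ω)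
    ((hkilled.measurable_partialSum' n).const_sub y)
  have hspace : |Φ (y / √(ε ^ 2 + (1 + η * ε ^ 2))) - Φ y| ≤ 2 * ε := by
    rw [add_left_comm]
    exact (abs_stdNormalCDF_div_sqrt_one_add_sub_le_self (by positivity) y).trans (by nlinarith)
  have hsum : (∑ i ∈ range n, ∫ ω, |stoppedDiff q (1 + η * ε ^ 2) X i ω| ^ (2 * p) ∂μ)
      / ε ^ (2 * p) ≤ ε := by
    rw [div_le_iff₀ (by positivity), mul_comm ε, ← Real.rpow_add_one hε.ne']
    refine (sum_le_sum fun i hi ↦ ?_).trans hmoment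
    have hi := mem_range.1 hi
    exact integral_mono (hXkilled i hi) (hX i hi) fun ω ↦
      abs_stoppedDiff_rpow_le (by linarith) _ i ω
  have hconst := lindebergConst_pos p η
  have hlind' := mul_le_mul_of_nonneg_left hsum
    (by positivity : 0 ≤ 8 * η + 2 * lindebergConst p η)
  rw [abs_le] at *
  constructor <;> linarith

/- The smoothed distance is bounded by a small multiple of the distance itself, because the decay
kernel is averaged against the law of the stopped sum; hence it can be absorbed. -/
lemma kolmogorovDist_stopped_le (h : IsMartingaleDifference μ ℱ X q)
    (hp : 1 ≤ p) (hη : 0 < η) (hη2 : η ≤ 1 / 2)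
    (hη8 : (256 * p + 2 ^ 18) * η * ((∫ w, decayKernel (1 / (4 * p)) w) + 2) ≤ 1 / 8)
    (hε : 0 < ε) (hε1 : ε ≤ 1)
    (hX : ∀ i < n, Integrable (fun ω ↦ |X i ω| ^ (2 * p)) μ)
    (hq : Integrable (fun ω ↦ |partialSum q n ω - 1| ^ p) μ)
    (hmoment : ∑ i ∈ range n, ∫ ω, |X i ω| ^ (2 * p) ∂μ ≤ ε ^ (2 * p + 1))
    (hvar : ∫ ω, |partialSum q n ω - 1| ^ p ∂μ ≤ ε ^ (2 * p + 1)) :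
    kolmogorovDist μ (partialSum (stoppedDiff q (1 + η * ε ^ 2) X) n) ≤
      2 * (8 * η + 2 * lindebergConst p η + η ^ (-p) + 10) * ε := by
  have hS := (h.stopped (1 + η * ε ^ 2)).measurable_partialSum' n
  set S := partialSum (stoppedDiff q (1 + η * ε ^ 2) X) n
  have hD : 0 ≤ kolmogorovDist μ S := kolmogorovDist_nonneg S
  have hmass : 0 ≤ ∫ w, decayKernel (1 / (4 * p)) w := integral_nonneg (decayKernel_nonneg _)
  have habsorb (y : ℝ) : (256 * p + 2 ^ 18) * η *
      ∫ ω, decayKernel (1 / (4 * p)) ((y - S ω) / ε) ∂μ ≤ (ε + kolmogorovDist μ S) / 8 :=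
    calc _ ≤ (256 * p + 2 ^ 18) * η *
          (((∫ w, decayKernel (1 / (4 * p)) w) + 2) * (ε + kolmogorovDist μ S)) := by
          gcongr
          refine (integral_decayKernel_div_le hS (by positivity) hε y).trans ?_
          nlinarith [mul_nonneg hmass hD]
      _ ≤ 1 / 8 * (ε + kolmogorovDist μ S) := by
          rw [← mul_assoc]
          gcongr
      _ = (ε + kolmogorovDist μ S) / 8 := by ring
  have hsmooth := kolmogorovDist_le_of_smoothed hS hε fun y ↦
    (h.abs_integral_stdNormalCDF_stopped_sub_le hp hη hη2 hε hε1 hX hq hmoment hvar y).trans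
      (add_le_add_left (habsorb y) _)
  have : 0 ≤ (8 * η + 2 * lindebergConst p η + η ^ (-p)) * ε := by
    have := lindebergConst_pos p η
    positivity
  linarith

lemma kolmogorovDist_partialSum_le (h : IsMartingaleDifference μ ℱ X q)
    (hp : 1 ≤ p) (hη : 0 < η) (hη2 : η ≤ 1 / 2)
    (hη8 : (256 * p + 2 ^ 18) * η * ((∫ w, decayKernel (1 / (4 * p)) w) + 2) ≤ 1 / 8)
    (hε : 0 < ε) (hε1 : ε ≤ 1)
    (hX : ∀ i < n, Integrable (fun ω ↦ |X i ω| ^ (2 * p)) μ)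
    (hq : Integrable (fun ω ↦ |partialSum q n ω - 1| ^ p) μ)
    (hmoment : ∑ i ∈ range n, ∫ ω, |X i ω| ^ (2 * p) ∂μ ≤ ε ^ (2 * p + 1))
    (hvar : ∫ ω, |partialSum q n ω - 1| ^ p ∂μ ≤ ε ^ (2 * p + 1)) :
    kolmogorovDist μ (partialSum X n) ≤
      (16 * η + 4 * lindebergConst p η + 3 * η ^ (-p) + 20) * ε := by
  have hkilled := h.kolmogorovDist_stopped_le hp hη hη2 hη8 hε hε1 hX hq hmoment hvar
  have hbad : μ.real {ω | η * ε ^ 2 ≤ |partialSum q n ω - 1|} ≤ η ^ (-p) * ε :=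
    (measureReal_le_abs_le (by linarith) (by positivity) hq).trans (div_rpow_mul_sq_le hη hε hvar)
  have heq : ∀ ω ∉ {ω | η * ε ^ 2 ≤ |partialSum q n ω - 1|},
      partialSum X n ω = partialSum (stoppedDiff q (1 + η * ε ^ 2) X) n ω := by
    intro ω hω
    have hclose : |partialSum q n ω - 1| < η * ε ^ 2 := not_le.1 hω
    exact (partialSum_stoppedDiff_of_le h.condVar_nonneg (by linarith [(abs_lt.1 hclose).2]) X).symm
  linarith [kolmogorovDist_le_add_measureReal (μ := μ) heq]

end IsMartingaleDifference

lemma exists_kolmogorovDist_partialSum_le {p : ℝ} (hp : 1 ≤ p) :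
    ∃ C : ℝ, 0 < C ∧ ∀ {Ω : Type*} {mΩ : MeasurableSpace Ω} {μ : Measure Ω}
      [IsProbabilityMeasure μ] {ℱ : Filtration ℕ mΩ} {X q : ℕ → Ω → ℝ} {n : ℕ} {ε : ℝ},
      IsMartingaleDifference μ ℱ X q → 0 < ε → ε ≤ 1 →
      (∀ i < n, Integrable (fun ω ↦ |X i ω| ^ (2 * p)) μ) →
      Integrable (fun ω ↦ |partialSum q n ω - 1| ^ p) μ →
      ∑ i ∈ range n, ∫ ω, |X i ω| ^ (2 * p) ∂μ ≤ ε ^ (2 * p + 1) →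
      ∫ ω, |partialSum q n ω - 1| ^ p ∂μ ≤ ε ^ (2 * p + 1) →
      kolmogorovDist μ (partialSum X n) ≤ C * ε := by
  have hmass : 0 ≤ ∫ w, decayKernel (1 / (4 * p)) w := integral_nonneg (decayKernel_nonneg _)
  set A := (256 * p + 2 ^ 18) * ((∫ w, decayKernel (1 / (4 * p)) w) + 2)
  have hA : 1 ≤ A := by nlinarith
  set η := 1 / (8 * A)
  have hη : 0 < η := by positivity
  have hη2 : η ≤ 1 / 2 := one_div_le_one_div_of_le two_pos (by linarith)
  have hη8 : (256 * p + 2 ^ 18) * η * ((∫ w, decayKernel (1 / (4 * p)) w) + 2) ≤ 1 / 8 := by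
    rw [mul_right_comm]
    change A * (1 / (8 * A)) ≤ 1 / 8
    field_simp
    rfl
  refine ⟨16 * η + 4 * lindebergConst p η + 3 * η ^ (-p) + 20, ?_, fun h hε hε1 hX hq hm hv ↦
    h.kolmogorovDist_partialSum_le hp hη hη2 hη8 hε hε1 hX hq hm hv⟩
  have := lindebergConst_pos p η
  positivity

end Rate

/-! ### The upper tail of the squared variation -/

section TruncatedSquare

/-- The square of `x`, cut off to `0` when it exceeds the level `a`. Its exponential moments are
controlled by a second and a `2p`-th moment of `x`. -/
noncomputable def truncatedSq (a x : ℝ) : ℝ := if x ^ 2 ≤ a then x ^ 2 else 0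

/-- The coefficient of `m ^ p` in the bound `m ^ 2 ≤ a ^ 2 * m + truncationConst p a * m ^ p`
for `0 ≤ m ≤ a`, see `sq_le_truncationConst`. -/
noncomputable def truncationConst (p a : ℝ) : ℝ := (a ^ 2) ^ (2 - p) + a ^ (2 - p)

variable {a m p x : ℝ}

lemma measurable_truncatedSq (a : ℝ) : Measurable (truncatedSq a) :=
  Measurable.ite (measurableSet_le (by fun_prop) measurable_const) (by fun_prop) measurable_const

lemma truncatedSq_nonneg (a x : ℝ) : 0 ≤ truncatedSq a x := by
  unfold truncatedSq; split_ifs <;> positivity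

lemma truncatedSq_le (ha : 0 ≤ a) (x : ℝ) : truncatedSq a x ≤ a := by
  unfold truncatedSq; split_ifs <;> assumption

lemma truncatedSq_le_sq (a x : ℝ) : truncatedSq a x ≤ x ^ 2 := by
  unfold truncatedSq; split_ifs <;> [exact le_rfl; positivity]

lemma truncationConst_pos (p : ℝ) (ha : 0 < a) : 0 < truncationConst p a := by
  unfold truncationConst; positivity

lemma sq_le_truncationConst (p : ℝ) (ha : 0 < a) (hm : 0 ≤ m) (hma : m ≤ a) :
    m ^ 2 ≤ a ^ 2 * m + truncationConst p a * m ^ p := by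
  have hconst := truncationConst_pos p ha
  rcases le_or_gt m (a ^ 2) with hsmall | hlarge
  · have : 0 ≤ truncationConst p a * m ^ p := by positivity
    nlinarith
  have hm_pos : 0 < m := (by positivity : 0 < a ^ 2).trans hlarge
  have hpow : m ^ (2 - p) ≤ truncationConst p a := by
    unfold truncationConst
    rcases le_total p 2 with hp | hp
    · exact (Real.rpow_le_rpow hm hma (by linarith)).trans (le_add_of_nonneg_left (by positivity))
    · exact (Real.rpow_le_rpow_of_nonpos (by positivity) hlarge.le (by linarith)).trans
        (le_add_of_nonneg_right (by positivity))
  calc m ^ 2 = m ^ (2 - p) * m ^ p := by rw [← Real.rpow_add hm_pos, sub_add_cancel, Real.rpow_two]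
    _ ≤ truncationConst p a * m ^ p := by gcongr
    _ ≤ a ^ 2 * m + truncationConst p a * m ^ p := le_add_of_nonneg_left (by positivity)

lemma abs_rpow_two_mul (p x : ℝ) : |x| ^ (2 * p) = (x ^ 2) ^ p := by
  rw [Real.rpow_mul (abs_nonneg x), Real.rpow_two, sq_abs]

lemma exp_inv_mul_truncatedSq_le (hp : 0 ≤ p) (ha : 0 < a) (x : ℝ) :
    Real.exp (a⁻¹ * truncatedSq a x) ≤
      1 + a⁻¹ * (1 + a) * x ^ 2 + a⁻¹ ^ 2 * truncationConst p a * |x| ^ (2 * p) := by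
  have hconst := truncationConst_pos p ha
  have hm := truncatedSq_nonneg a x
  have hma := truncatedSq_le ha.le x
  have hmx := truncatedSq_le_sq a x
  set m := truncatedSq a x
  have hunit : |a⁻¹ * m| ≤ 1 := by
    rw [abs_of_nonneg (by positivity), inv_mul_le_iff₀ ha, mul_one]
    exact hma
  have hexp := (abs_le.1 (Real.abs_exp_sub_one_sub_id_le hunit)).2
  calc Real.exp (a⁻¹ * m) ≤ 1 + a⁻¹ * m + a⁻¹ ^ 2 * m ^ 2 := by linarith
    _ ≤ 1 + a⁻¹ * m + a⁻¹ ^ 2 * (a ^ 2 * m + truncationConst p a * m ^ p) := by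
        gcongr
        exact sq_le_truncationConst p ha hm hma
    _ = 1 + a⁻¹ * (1 + a) * m + a⁻¹ ^ 2 * truncationConst p a * m ^ p := by field_simp; ring
    _ ≤ 1 + a⁻¹ * (1 + a) * x ^ 2 + a⁻¹ ^ 2 * truncationConst p a * |x| ^ (2 * p) := by
        rw [abs_rpow_two_mul]
        gcongr

lemma truncatedSq_eq_sq_of_sum_lt {u : ℕ → ℝ} {n i : ℕ} (hp : 0 < p) (ha : 0 ≤ a)
    (hsum : ∑ j ∈ range n, |u j| ^ (2 * p) < a ^ p) (hi : i ∈ range n) :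
    truncatedSq a (u i) = u i ^ 2 := by
  have hlt : (u i ^ 2) ^ p < a ^ p := by
    rw [← abs_rpow_two_mul]
    exact (single_le_sum (f := fun j ↦ |u j| ^ (2 * p)) (fun j _ ↦ by positivity) hi).trans_lt hsum
  exact if_pos ((Real.rpow_lt_rpow_iff (sq_nonneg _) ha hp).1 hlt).le

end TruncatedSquare

section ExponentialSupermartingale

variable {Ω : Type*} {mΩ : MeasurableSpace Ω} {μ : Measure Ω} {ℱ : Filtration ℕ mΩ}
  {Y d : ℕ → Ω → ℝ} {b : ℝ}

lemma partialSum_sub_le (hYb : ∀ i ω, Y i ω ≤ b) (hd0 : ∀ i, 0 ≤ᵐ[μ] d i) (k : ℕ) :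
    ∀ᵐ ω ∂μ, partialSum (fun i ω ↦ Y i ω - d i ω) k ω ≤ k * b := by
  filter_upwards [ae_all_iff.2 hd0] with ω hω
  refine (sum_le_card_nsmul (range k) _ b fun i _ ↦ ?_).trans_eq (by simp)
  exact (sub_le_self _ (hω i)).trans (hYb i ω)

lemma measurable_partialSum_sub (hY : ∀ i, Measurable[ℱ (i + 1)] (Y i))
    (hd : ∀ i, Measurable[ℱ i] (d i)) (k : ℕ) :
    Measurable[ℱ k] (partialSum (fun i ω ↦ Y i ω - d i ω) k) :=
  Finset.measurable_fun_sum _ fun i hi ↦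
    ((hY i).le (ℱ.mono (mem_range.1 hi))).sub ((hd i).le (ℱ.mono (mem_range.1 hi).le))

lemma integrable_exp_partialSum_sub [IsFiniteMeasure μ]
    (hY : ∀ i, Measurable[ℱ (i + 1)] (Y i)) (hd : ∀ i, Measurable[ℱ i] (d i))
    (hYb : ∀ i ω, Y i ω ≤ b) (hd0 : ∀ i, 0 ≤ᵐ[μ] d i) (k : ℕ) :
    Integrable (fun ω ↦ Real.exp (partialSum (fun i ω ↦ Y i ω - d i ω) k ω)) μ := by
  refine Integrable.of_bound
    (((measurable_partialSum_sub hY hd k).le (ℱ.le k)).exp).aestronglyMeasurable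
    (Real.exp (k * b)) ?_
  filter_upwards [partialSum_sub_le hYb hd0 k] with ω hω
  rw [Real.norm_of_nonneg (Real.exp_pos _).le]
  exact Real.exp_le_exp.2 hω

lemma integral_exp_partialSum_sub_le_one [IsProbabilityMeasure μ] {k : ℕ}
    (hY : ∀ i, Measurable[ℱ (i + 1)] (Y i)) (hd : ∀ i, Measurable[ℱ i] (d i))
    (hYb : ∀ i ω, Y i ω ≤ b) (hd0 : ∀ i, 0 ≤ᵐ[μ] d i)
    (hexp : ∀ i < k, μ[fun ω ↦ Real.exp (Y i ω) | ℱ i] ≤ᵐ[μ] fun ω ↦ Real.exp (d i ω)) :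
    ∫ ω, Real.exp (partialSum (fun i ω ↦ Y i ω - d i ω) k ω) ∂μ ≤ 1 := by
  induction k with
  | zero => simp [partialSum_zero]
  | succ k ih =>
    refine le_trans ?_ (ih fun i hi ↦ hexp i (hi.trans k.lt_succ_self))
    set L := partialSum (fun i ω ↦ Y i ω - d i ω)
    set W : Ω → ℝ := fun ω ↦ Real.exp (L k ω - d k ω)
    have hW : Measurable[ℱ k] W := ((measurable_partialSum_sub hY hd k).sub (hd k)).exp
    have hW_bound : ∀ᵐ ω ∂μ, ‖W ω‖ ≤ Real.exp (k * b) := by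
      filter_upwards [partialSum_sub_le hYb hd0 k, hd0 k] with ω hω hωd
      rw [Real.norm_of_nonneg (Real.exp_pos _).le]
      exact Real.exp_le_exp.2 ((sub_le_self _ hωd).trans hω)
    have hY_int : Integrable (fun ω ↦ Real.exp (Y k ω)) μ := by
      refine Integrable.of_bound ((hY k).le (ℱ.le _)).exp.aestronglyMeasurable (Real.exp b)
        (ae_of_all _ fun ω ↦ ?_)
      rw [Real.norm_of_nonneg (Real.exp_pos _).le]
      exact Real.exp_le_exp.2 (hYb k ω)
    have hfactor : (fun ω ↦ Real.exp (L (k + 1) ω)) = W * fun ω ↦ Real.exp (Y k ω) := by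
      ext ω
      have hsucc : L (k + 1) ω = L k ω + (Y k ω - d k ω) := partialSum_succ _ k ω
      rw [Pi.mul_apply, ← Real.exp_add, hsucc, sub_add_eq_add_sub, add_sub_assoc]
    rw [← integral_condExp (ℱ.le k), hfactor]
    refine integral_mono_ae integrable_condExp (integrable_exp_partialSum_sub hY hd hYb hd0 k) ?_
    filter_upwards [condExp_stronglyMeasurable_mul_of_bound (ℱ.le k) hW.stronglyMeasurable hY_int _
      hW_bound, hexp k k.lt_succ_self] with ω hpull hω
    calc _ = W ω * (μ[fun ω ↦ Real.exp (Y k ω) | ℱ k]) ω := hpull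
      _ ≤ W ω * Real.exp (d k ω) := mul_le_mul_of_nonneg_left hω (Real.exp_pos _).le
      _ = Real.exp (L k ω) := by rw [← Real.exp_add, sub_add_cancel]

end ExponentialSupermartingale

section SquaredVariation

variable {Ω : Type*} {mΩ : MeasurableSpace Ω} {μ : Measure Ω} {ℱ : Filtration ℕ mΩ}
  {X q : ℕ → Ω → ℝ} {p a ε : ℝ} {n i : ℕ}

/-- The predictable process that turns the sum of the `a⁻¹ * truncatedSq a (X i)` into the exponent
of a supermartingale. -/
noncomputable def truncationCompensator (μ : Measure Ω) (ℱ : Filtration ℕ mΩ) (p a : ℝ)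
    (X q : ℕ → Ω → ℝ) (i : ℕ) (ω : Ω) : ℝ :=
  a⁻¹ * (1 + a) * q i ω
    + a⁻¹ ^ 2 * truncationConst p a * (μ[fun ω ↦ |X i ω| ^ (2 * p) | ℱ i]) ω

/-- The sum of the compensated `a⁻¹ * truncatedSq a (X i)`, whose exponential is a
supermartingale. -/
noncomputable def truncatedExcess (μ : Measure Ω) (ℱ : Filtration ℕ mΩ) (p a : ℝ)
    (X q : ℕ → Ω → ℝ) : ℕ → Ω → ℝ :=
  partialSum fun i ω ↦ a⁻¹ * truncatedSq a (X i ω) - truncationCompensator μ ℱ p a X q i ω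

lemma truncatedExcess_eq (μ : Measure Ω) (ℱ : Filtration ℕ mΩ) (p a : ℝ) (X q : ℕ → Ω → ℝ)
    (n : ℕ) (ω : Ω) :
    truncatedExcess μ ℱ p a X q n ω = a⁻¹ * ∑ i ∈ range n, truncatedSq a (X i ω)
      - (a⁻¹ * (1 + a) * partialSum q n ω + a⁻¹ ^ 2 * truncationConst p a *
        partialSum (fun i ↦ μ[fun ω ↦ |X i ω| ^ (2 * p) | ℱ i]) n ω) := by
  simp only [truncatedExcess, truncationCompensator, partialSum, sum_sub_distrib, sum_add_distrib,
    mul_sum]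

lemma partialSum_sq_le_of_truncatedExcess_lt {ω : Ω} (hp : 0 < p) (ha : 0 < a) (haε : a ≤ ε)
    (hε1 : ε ≤ 1) (hX : partialSum (fun i ω ↦ |X i ω| ^ (2 * p)) n ω < a ^ p)
    (hq : |partialSum q n ω - 1| < ε)
    (hcond : partialSum (fun i ↦ μ[fun ω ↦ |X i ω| ^ (2 * p) | ℱ i]) n ω
      < ε * a / truncationConst p a)
    (hexcess : truncatedExcess μ ℱ p a X q n ω < a⁻¹ * ε) :
    partialSum (fun i ω ↦ X i ω ^ 2) n ω ≤ 1 + 5 * ε := by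
  have hc := truncationConst_pos p ha
  have htrunc : ∑ i ∈ range n, truncatedSq a (X i ω) = partialSum (fun i ω ↦ X i ω ^ 2) n ω :=
    sum_congr rfl fun i hi ↦ truncatedSq_eq_sq_of_sum_lt hp ha.le hX hi
  rw [truncatedExcess_eq, htrunc] at hexcess
  rw [lt_div_iff₀ hc] at hcond
  set V := partialSum (fun i ω ↦ X i ω ^ 2) n ω
  set Q := partialSum q n ω
  set B := partialSum (fun i ↦ μ[fun ω ↦ |X i ω| ^ (2 * p) | ℱ i]) n ω
  have hB : a⁻¹ ^ 2 * truncationConst p a * B ≤ a⁻¹ * ε := by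
    calc a⁻¹ ^ 2 * truncationConst p a * B = a⁻¹ ^ 2 * (B * truncationConst p a) := by ring
      _ ≤ a⁻¹ ^ 2 * (ε * a) := by gcongr
      _ = a⁻¹ * ε := by field_simp
  have hV : a⁻¹ * V ≤ a⁻¹ * ((1 + a) * Q + 2 * ε) := by linarith
  have hQ : Q ≤ 1 + ε := by linarith [(abs_lt.1 hq).2]
  calc V ≤ (1 + a) * Q + 2 * ε := le_of_mul_le_mul_left hV (inv_pos.2 ha)
    _ ≤ (1 + a) * (1 + ε) + 2 * ε := by gcongr
    _ ≤ 1 + 5 * ε := by nlinarith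

lemma measureReal_le_of_integral_le_mul {Z : Ω → ℝ} {c δ : ℝ} (hZ0 : 0 ≤ᵐ[μ] Z)
    (hZ : Integrable Z μ) (hc : 0 < c) (hle : ∫ ω, Z ω ∂μ ≤ c * δ) : μ.real {ω | c ≤ Z ω} ≤ δ :=
  le_of_mul_le_mul_left ((mul_meas_ge_le_integral_of_nonneg hZ0 hZ c).trans hle) hc

lemma integral_partialSum {f : ℕ → Ω → ℝ} (hf : ∀ i < n, Integrable (f i) μ) :
    ∫ ω, partialSum f n ω ∂μ = ∑ i ∈ range n, ∫ ω, f i ω ∂μ :=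
  integral_finsetSum _ fun i hi ↦ hf i (mem_range.1 hi)

lemma measureReal_le_abs_le_of_le_rpow {Z : Ω → ℝ} (hp : 0 < p) (hε : 0 < ε) (hε1 : ε ≤ 1)
    (hZ : Integrable (fun ω ↦ |Z ω| ^ p) μ) (hm : ∫ ω, |Z ω| ^ p ∂μ ≤ ε ^ (2 * p + 1)) :
    μ.real {ω | ε ≤ |Z ω|} ≤ ε := by
  refine (measureReal_le_abs_le hp hε hZ).trans ?_
  rw [div_le_iff₀ (by positivity), ← Real.rpow_one_add' hε.le (by linarith)]
  exact hm.trans (Real.rpow_le_rpow_of_exponent_ge hε hε1 (by linarith))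

lemma exp_neg_le_div_rpow {L : ℝ} (hp : 0 < p) (hL : 0 < L) : Real.exp (-L) ≤ (p / L) ^ p := by
  have hbase : Real.exp (-(L / p)) ≤ p / L := by
    rw [Real.exp_neg, ← inv_div L p]
    exact inv_anti₀ (by positivity) ((lt_add_one _).le.trans (Real.add_one_le_exp _))
  calc Real.exp (-L) = Real.exp (-(L / p)) ^ p := by
        rw [← Real.exp_mul]
        congr 1
        field_simp
    _ ≤ (p / L) ^ p := Real.rpow_le_rpow (Real.exp_pos _).le hbase hp.le

section TruncationLevel

/-- The level at which the squares are truncated: for `N = ε ^ (2 * p + 1)` both the probability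
that a square exceeds it and the deviation bound of the truncated sum are of order `ε`. -/
noncomputable def truncationLevel (p ε : ℝ) : ℝ := ε ^ (1 + 1 / p)

lemma truncationLevel_pos (p : ℝ) (hε : 0 < ε) : 0 < truncationLevel p ε :=
  Real.rpow_pos_of_pos hε _

lemma truncationLevel_le (hp : 0 ≤ p) (hε : 0 < ε) (hε1 : ε ≤ 1) : truncationLevel p ε ≤ ε :=
  (Real.rpow_le_rpow_of_exponent_ge hε hε1 (le_add_of_nonneg_right (by positivity))).trans_eq
    (Real.rpow_one ε)

lemma truncationLevel_rpow (hp : p ≠ 0) (hε : 0 < ε) : truncationLevel p ε ^ p = ε ^ (p + 1) := by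
  rw [truncationLevel, ← Real.rpow_mul hε.le]
  congr 1
  field_simp

lemma inv_truncationLevel_mul (p : ℝ) (hε : 0 < ε) :
    (truncationLevel p ε)⁻¹ * ε = ε ^ (-(1 / p)) := by
  rw [truncationLevel, ← Real.rpow_neg hε.le, ← Real.rpow_add_one hε.ne']
  congr 1
  ring

lemma exp_neg_inv_truncationLevel_mul_le (hp : 0 < p) (hε : 0 < ε) :
    Real.exp (-((truncationLevel p ε)⁻¹ * ε)) ≤ p ^ p * ε := by
  have ha := truncationLevel_pos p hε
  refine (exp_neg_le_div_rpow hp (by positivity)).trans_eq ?_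
  rw [inv_truncationLevel_mul p hε, Real.rpow_neg hε.le, div_inv_eq_mul,
    Real.mul_rpow hp.le (by positivity), ← Real.rpow_mul hε.le, one_div_mul_cancel hp.ne',
    Real.rpow_one]

lemma truncationConst_truncationLevel (hp : p ≠ 0) (hε : 0 < ε) :
    truncationConst p (truncationLevel p ε) =
      ε ^ (2 * (1 - p + 2 * (1 / p))) + ε ^ (1 - p + 2 * (1 / p)) := by
  rw [truncationConst, truncationLevel, ← Real.rpow_two, ← Real.rpow_mul hε.le,
    ← Real.rpow_mul hε.le, ← Real.rpow_mul hε.le]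
  congr 2 <;> field_simp <;> ring

lemma rpow_le_mul_truncationLevel_div (hp : 1 ≤ p) (hε : 0 < ε) (hε1 : ε ≤ 1) :
    ε ^ (2 * p + 1) ≤
      ε * truncationLevel p ε / truncationConst p (truncationLevel p ε) * (2 * ε) := by
  have hinv : 0 < 1 / p := by positivity
  have hcubic : ε * truncationLevel p ε * (2 * ε) = ε ^ (3 + 1 / p) + ε ^ (3 + 1 / p) := by
    rw [show 3 + 1 / p = 1 + 1 / p + 2 by ring, Real.rpow_add hε, Real.rpow_two, truncationLevel]
    ring
  rw [div_mul_eq_mul_div, le_div_iff₀ (truncationConst_pos p (truncationLevel_pos p hε)), hcubic,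
    truncationConst_truncationLevel (by positivity) hε, mul_add, ← Real.rpow_add hε,
    ← Real.rpow_add hε]
  exact add_le_add (Real.rpow_le_rpow_of_exponent_ge hε hε1 (by linarith))
    (Real.rpow_le_rpow_of_exponent_ge hε hε1 (by linarith))

end TruncationLevel

lemma measureReal_truncationLevel_rpow_le_partialSum_le (hp : 1 ≤ p) (hε : 0 < ε)
    (hε1 : ε ≤ 1)
    (hX : ∀ i < n, Integrable (fun ω ↦ |X i ω| ^ (2 * p)) μ)
    (hm : ∑ i ∈ range n, ∫ ω, |X i ω| ^ (2 * p) ∂μ ≤ ε ^ (2 * p + 1)) :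
    μ.real {ω | truncationLevel p ε ^ p ≤ partialSum (fun i ω ↦ |X i ω| ^ (2 * p)) n ω} ≤ ε := by
  refine measureReal_le_of_integral_le_mul (ae_of_all _ fun ω ↦ ?_)
    (integrable_finsetSum _ fun i hi ↦ hX i (mem_range.1 hi))
    (Real.rpow_pos_of_pos (truncationLevel_pos p hε) p) ?_
  · exact sum_nonneg fun i _ ↦ by positivity
  · rw [integral_partialSum hX, truncationLevel_rpow (by positivity) hε, ← Real.rpow_add_one hε.ne']
    exact hm.trans (Real.rpow_le_rpow_of_exponent_ge hε hε1 (by linarith))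

lemma condExp_one_add_mul_add_mul [IsFiniteMeasure μ] {m : MeasurableSpace Ω} (hm : m ≤ mΩ)
    {f g : Ω → ℝ} (α β : ℝ) (hf : Integrable f μ) (hg : Integrable g μ) :
    μ[fun ω ↦ 1 + α * f ω + β * g ω | m] =ᵐ[μ]
      fun ω ↦ 1 + α * (μ[f | m]) ω + β * (μ[g | m]) ω := by
  have hone : Integrable (fun _ : Ω ↦ (1 : ℝ)) μ := integrable_const 1
  filter_upwards [condExp_add (hone.add (hf.const_mul α)) (hg.const_mul β) m,
    condExp_add hone (hf.const_mul α) m, condExp_smul (μ := μ) α f m,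
    condExp_smul (μ := μ) β g m] with ω hadd hadd' hα hβ
  refine hadd.trans ?_
  rw [Pi.add_apply, hadd', Pi.add_apply, condExp_const hm]
  exact congr_arg₂ _ (congr_arg _ hα) hβ

namespace IsMartingaleDifference

lemma condExp_exp_truncatedSq_le [IsFiniteMeasure μ] (h : IsMartingaleDifference μ ℱ X q)
    (hp : 0 ≤ p) (ha : 0 < a) (hX : Integrable (fun ω ↦ |X i ω| ^ (2 * p)) μ) :
    μ[fun ω ↦ Real.exp (a⁻¹ * truncatedSq a (X i ω)) | ℱ i] ≤ᵐ[μ]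
      fun ω ↦ Real.exp (truncationCompensator μ ℱ p a X q i ω) := by
  set α := a⁻¹ * (1 + a)
  set β := a⁻¹ ^ 2 * truncationConst p a
  have hsq := (h.memLp i).integrable_sq
  have hmajor : Integrable (fun ω ↦ 1 + α * X i ω ^ 2 + β * |X i ω| ^ (2 * p)) μ :=
    ((integrable_const 1).add (hsq.const_mul α)).add (hX.const_mul β)
  have hle (ω : Ω) : Real.exp (a⁻¹ * truncatedSq a (X i ω)) ≤
      1 + α * X i ω ^ 2 + β * |X i ω| ^ (2 * p) := exp_inv_mul_truncatedSq_le hp ha (X i ω)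
  have hexp : Integrable (fun ω ↦ Real.exp (a⁻¹ * truncatedSq a (X i ω))) μ := by
    refine hmajor.mono' ?_ (ae_of_all _ fun ω ↦ ?_)
    · exact (((measurable_truncatedSq a).comp (h.measurable i)).const_mul
        a⁻¹).exp.aestronglyMeasurable
    · rw [Real.norm_of_nonneg (Real.exp_pos _).le]
      exact hle ω
  filter_upwards [condExp_mono (m := ℱ i) hexp hmajor (ae_of_all _ hle),
    condExp_one_add_mul_add_mul (ℱ.le i) α β hsq hX, h.condExp_sq i] with ω hmono hlinear hq
  calc _ ≤ 1 + (α * q i ω + β * (μ[fun ω ↦ |X i ω| ^ (2 * p) | ℱ i]) ω) := by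
        rw [← hq, ← add_assoc, ← hlinear]
        exact hmono
    _ ≤ Real.exp (truncationCompensator μ ℱ p a X q i ω) := by
        rw [add_comm]
        exact Real.add_one_le_exp _

lemma measureReal_le_truncatedExcess_le [IsProbabilityMeasure μ]
    (h : IsMartingaleDifference μ ℱ X q) (hp : 0 ≤ p) (ha : 0 < a)
    (hX : ∀ i < n, Integrable (fun ω ↦ |X i ω| ^ (2 * p)) μ) (c : ℝ) :
    μ.real {ω | c ≤ truncatedExcess μ ℱ p a X q n ω} ≤ Real.exp (-c) := by
  have hc := truncationConst_pos p ha
  have hY (i : ℕ) : Measurable[ℱ (i + 1)] fun ω ↦ a⁻¹ * truncatedSq a (X i ω) :=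
    ((measurable_truncatedSq a).comp (h.measurable_succ i)).const_mul a⁻¹
  have hY_le (i : ℕ) (ω : Ω) : a⁻¹ * truncatedSq a (X i ω) ≤ 1 := by
    rw [inv_mul_le_iff₀ ha, mul_one]
    exact truncatedSq_le ha.le _
  have hd (i : ℕ) : Measurable[ℱ i] (truncationCompensator μ ℱ p a X q i) :=
    ((h.measurable_condVar i).const_mul _).add (stronglyMeasurable_condExp.measurable.const_mul _)
  have hd_nonneg (i : ℕ) : 0 ≤ᵐ[μ] truncationCompensator μ ℱ p a X q i := by
    have hcond : 0 ≤ᵐ[μ] μ[fun ω ↦ |X i ω| ^ (2 * p) | ℱ i] :=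
      condExp_nonneg (ae_of_all _ fun ω ↦ by positivity)
    filter_upwards [hcond] with ω hω
    have hω : 0 ≤ (μ[fun ω ↦ |X i ω| ^ (2 * p) | ℱ i]) ω := hω
    have := h.condVar_nonneg i ω
    exact add_nonneg (by positivity) (by positivity)
  have hmean : ∫ ω, Real.exp (truncatedExcess μ ℱ p a X q n ω) ∂μ ≤ 1 :=
    integral_exp_partialSum_sub_le_one hY hd hY_le hd_nonneg fun i hi ↦
      h.condExp_exp_truncatedSq_le hp ha (hX i hi)
  simp only [← Real.exp_le_exp (x := c)]
  refine measureReal_le_of_integral_le_mul (ae_of_all _ fun ω ↦ (Real.exp_pos _).le)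
    (integrable_exp_partialSum_sub hY hd hY_le hd_nonneg n) (Real.exp_pos c) (hmean.trans_eq ?_)
  rw [← Real.exp_add, add_neg_cancel, Real.exp_zero]

end IsMartingaleDifference

lemma measureReal_le_partialSum_condExp_le [IsFiniteMeasure μ] (hp : 1 ≤ p) (hε : 0 < ε)
    (hε1 : ε ≤ 1)
    (hm : ∑ i ∈ range n, ∫ ω, |X i ω| ^ (2 * p) ∂μ ≤ ε ^ (2 * p + 1)) :
    μ.real {ω | ε * truncationLevel p ε / truncationConst p (truncationLevel p ε)
      ≤ partialSum (fun i ↦ μ[fun ω ↦ |X i ω| ^ (2 * p) | ℱ i]) n ω} ≤ 2 * ε := by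
  have ha := truncationLevel_pos p hε
  have hc := truncationConst_pos p ha
  have hnonneg : ∀ᵐ ω ∂μ, ∀ i, 0 ≤ (μ[fun ω ↦ |X i ω| ^ (2 * p) | ℱ i]) ω :=
    ae_all_iff.2 fun i ↦ condExp_nonneg (ae_of_all _ fun ω ↦ by positivity)
  refine measureReal_le_of_integral_le_mul (hnonneg.mono fun ω hω ↦ sum_nonneg fun i _ ↦ hω i)
    (integrable_finsetSum _ fun i _ ↦ integrable_condExp) (by positivity) ?_
  rw [integral_partialSum fun i _ ↦ integrable_condExp]
  simp only [integral_condExp (ℱ.le _)]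
  exact hm.trans (rpow_le_mul_truncationLevel_div hp hε hε1)

lemma IsMartingaleDifference.measureReal_lt_or_lt_le [IsProbabilityMeasure μ]
    (h : IsMartingaleDifference μ ℱ X q) (hp : 1 ≤ p) (hε : 0 < ε) (hε1 : ε ≤ 1)
    (hX : ∀ i < n, Integrable (fun ω ↦ |X i ω| ^ (2 * p)) μ)
    (hq : Integrable (fun ω ↦ |partialSum q n ω - 1| ^ p) μ)
    (hm : ∑ i ∈ range n, ∫ ω, |X i ω| ^ (2 * p) ∂μ ≤ ε ^ (2 * p + 1))
    (hv : ∫ ω, |partialSum q n ω - 1| ^ p ∂μ ≤ ε ^ (2 * p + 1)) :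
    μ.real {ω | 1 + 5 * ε < partialSum q n ω ∨ 1 + 5 * ε < partialSum (fun i ω ↦ X i ω ^ 2) n ω} ≤
      (4 + p ^ p) * ε := by
  have ha := truncationLevel_pos p hε
  have hlarge := measureReal_truncationLevel_rpow_le_partialSum_le hp hε hε1 hX hm
  have hvar := measureReal_le_abs_le_of_le_rpow (by linarith) hε hε1 hq hv
  have hcond := measureReal_le_partialSum_condExp_le (ℱ := ℱ) hp hε hε1 hm
  have hp0 : 0 < p := by linarith
  have hexcess := (h.measureReal_le_truncatedExcess_le hp0.le ha hX _).trans
    (exp_neg_inv_truncationLevel_mul_le hp0 hε)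
  have hcover : {ω | 1 + 5 * ε < partialSum q n ω ∨
      1 + 5 * ε < partialSum (fun i ω ↦ X i ω ^ 2) n ω} ⊆
      ({ω | truncationLevel p ε ^ p ≤ partialSum (fun i ω ↦ |X i ω| ^ (2 * p)) n ω} ∪
        {ω | ε ≤ |partialSum q n ω - 1|}) ∪
      ({ω | ε * truncationLevel p ε / truncationConst p (truncationLevel p ε)
        ≤ partialSum (fun i ↦ μ[fun ω ↦ |X i ω| ^ (2 * p) | ℱ i]) n ω} ∪
        {ω | (truncationLevel p ε)⁻¹ * ε ≤
          truncatedExcess μ ℱ p (truncationLevel p ε) X q n ω}) := by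
    intro ω hω
    contrapose! hω
    simp only [Set.mem_union, Set.mem_ofPred_eq, not_or, not_le] at hω
    obtain ⟨⟨hX', hq'⟩, hcond', hexcess'⟩ := hω
    rw [Set.mem_ofPred_eq, not_or, not_lt, not_lt]
    exact ⟨by linarith [(abs_lt.1 hq').2], partialSum_sq_le_of_truncatedExcess_lt (by linarith) ha
      (truncationLevel_le (by linarith) hε hε1) hε1 hX' hq' hcond' hexcess'⟩
  calc _ ≤ (ε + ε) + (2 * ε + p ^ p * ε) :=
        (measureReal_mono hcover).trans <| (measureReal_union_le _ _).trans <| add_le_add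
          ((measureReal_union_le _ _).trans (add_le_add hlarge hvar))
          ((measureReal_union_le _ _).trans (add_le_add hcond hexcess))
    _ = (4 + p ^ p) * ε := by ring

end SquaredVariation

/-! ### Mixed normalisations -/

section MixedNormalisation

variable {Ω : Type*} {mΩ : MeasurableSpace Ω} {μ : Measure Ω} {ℱ : Filtration ℕ mΩ}
  {X q : ℕ → Ω → ℝ} {p ε t₁ t₂ x : ℝ} {n : ℕ}

lemma mul_le_mul_sqrt_mix {u v : ℝ} (hε : 0 ≤ ε) (hu : u ≤ 1 + 5 * ε) (hv : v ≤ 1 + 5 * ε)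
    (ht₁ : 0 ≤ t₁) (ht₂ : 0 ≤ t₂) (ht : t₁ + t₂ ≤ 1) (hx : x ≤ 0) :
    (1 + 5 * ε) * x ≤ x * √(t₁ * u + t₂ * v + (1 - t₁ - t₂)) := by
  have hmix : t₁ * u + t₂ * v + (1 - t₁ - t₂) ≤ (1 + 5 * ε) ^ 2 := by
    calc t₁ * u + t₂ * v + (1 - t₁ - t₂)
        ≤ t₁ * (1 + 5 * ε) + t₂ * (1 + 5 * ε) + (1 - t₁ - t₂) * (1 + 5 * ε) := by
          gcongr
          exact le_mul_of_one_le_right (by linarith) (by linarith)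
      _ = 1 + 5 * ε := by ring
      _ ≤ (1 + 5 * ε) ^ 2 := by nlinarith
  rw [mul_comm]
  exact mul_le_mul_of_nonpos_left (Real.sqrt_le_iff.2 ⟨by linarith, hmix⟩) hx

lemma exists_stdNormalCDF_sub_le_measureReal (hp : 1 ≤ p) :
    ∃ C : ℝ, 1 ≤ C ∧ ∀ {Ω : Type*} {mΩ : MeasurableSpace Ω} {μ : Measure Ω}
      [IsProbabilityMeasure μ] {ℱ : Filtration ℕ mΩ} {X q : ℕ → Ω → ℝ} {n : ℕ} {ε t₁ t₂ x : ℝ},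
      IsMartingaleDifference μ ℱ X q → 0 < ε → ε ≤ 1 →
      (∀ i < n, Integrable (fun ω ↦ |X i ω| ^ (2 * p)) μ) →
      Integrable (fun ω ↦ |partialSum q n ω - 1| ^ p) μ →
      ∑ i ∈ range n, ∫ ω, |X i ω| ^ (2 * p) ∂μ ≤ ε ^ (2 * p + 1) →
      ∫ ω, |partialSum q n ω - 1| ^ p ∂μ ≤ ε ^ (2 * p + 1) →
      0 ≤ t₁ → 0 ≤ t₂ → t₁ + t₂ ≤ 1 → x ≤ 0 →
      Φ x - C * ε ≤ μ.real {ω | partialSum X n ω ≤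
        x * √(t₁ * partialSum q n ω + t₂ * partialSum (fun i ω ↦ X i ω ^ 2) n ω
          + (1 - t₁ - t₂))} := by
  obtain ⟨C, hC, hkolmogorov⟩ := exists_kolmogorovDist_partialSum_le hp
  refine ⟨C + 5 + (4 + p ^ p), by linarith [Real.rpow_nonneg (by linarith : 0 ≤ p) p], ?_⟩
  intro Ω mΩ μ _ ℱ X q n ε t₁ t₂ x h hε hε1 hX hq hm hv ht₁ ht₂ ht hx
  have hdist := (abs_le.1 (abs_measureReal_sub_stdNormalCDF_le (μ := μ) (partialSum X n)
    ((1 + 5 * ε) * x))).1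
  have hrate := hkolmogorov h hε hε1 hX hq hm hv
  have hscale := (abs_le.1 (abs_stdNormalCDF_mul_sub_le x (by linarith : 1 ≤ 1 + 5 * ε))).1
  have htail := h.measureReal_lt_or_lt_le hp hε hε1 hX hq hm hv
  have hcover : {ω | partialSum X n ω ≤ (1 + 5 * ε) * x} ⊆
      {ω | partialSum X n ω ≤ x * √(t₁ * partialSum q n ω
        + t₂ * partialSum (fun i ω ↦ X i ω ^ 2) n ω + (1 - t₁ - t₂))} ∪
      {ω | 1 + 5 * ε < partialSum q n ω ∨
        1 + 5 * ε < partialSum (fun i ω ↦ X i ω ^ 2) n ω} := by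
    intro ω hω
    refine or_iff_not_imp_right.2 fun hgood ↦ ?_
    rw [Set.mem_ofPred_eq, not_or, not_lt, not_lt] at hgood
    exact le_trans hω (mul_le_mul_sqrt_mix hε.le hgood.1 hgood.2 ht₁ ht₂ ht hx)
  have hunion := (measureReal_mono (μ := μ) hcover).trans (measureReal_union_le _ _)
  linarith

end MixedNormalisation

section Reindexing

variable {Ω : Type*} {mΩ : MeasurableSpace Ω} {μ : Measure Ω} {ℱ : Filtration ℕ mΩ}
  {X Y : ℕ → Ω → ℝ} {f : Ω → ℝ} {p : ℝ} {n i : ℕ}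

/-- A version of the conditional variances that is nonnegative everywhere. -/
noncomputable def nonnegCondVar (μ : Measure Ω) (ℱ : Filtration ℕ mΩ) (Y : ℕ → Ω → ℝ) (i : ℕ)
    (ω : Ω) : ℝ := max ((μ[fun ω ↦ Y i ω ^ 2 | ℱ i]) ω) 0

lemma condExp_sq_ae_eq_nonnegCondVar (i : ℕ) :
    μ[fun ω ↦ Y i ω ^ 2 | ℱ i] =ᵐ[μ] nonnegCondVar μ ℱ Y i := by
  have hnonneg : 0 ≤ᵐ[μ] μ[fun ω ↦ Y i ω ^ 2 | ℱ i] :=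
    condExp_nonneg (ae_of_all _ fun ω ↦ sq_nonneg _)
  exact hnonneg.mono fun ω hω ↦ (max_eq_left hω).symm

lemma isMartingaleDifference_nonnegCondVar (hY : ∀ i, Measurable[ℱ (i + 1)] (Y i))
    (hY2 : ∀ i, MemLp (Y i) 2 μ) (hmart : ∀ i, μ[Y i | ℱ i] =ᵐ[μ] 0) :
    IsMartingaleDifference μ ℱ Y (nonnegCondVar μ ℱ Y) where
  measurable_succ := hY
  measurable_condVar _ := stronglyMeasurable_condExp.measurable.max measurable_const
  condVar_nonneg _ _ := le_max_right _ _
  memLp := hY2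
  condExp_eq_zero := hmart
  condExp_sq := condExp_sq_ae_eq_nonnegCondVar

lemma memLp_of_integrable_abs_rpow {r : ℝ} (hr : 0 < r) (hf : AEStronglyMeasurable f μ)
    (hint : Integrable (fun ω ↦ |f ω| ^ r) μ) : MemLp f (ENNReal.ofReal r) μ := by
  rw [← integrable_norm_rpow_iff hf (by simpa using hr) ENNReal.ofReal_ne_top,
    ENNReal.toReal_ofReal hr.le]
  exact hint

lemma memLp_two_of_integrable_abs_rpow [IsFiniteMeasure μ] (hp : 1 ≤ p)
    (hf : AEStronglyMeasurable f μ) (hint : Integrable (fun ω ↦ |f ω| ^ (2 * p)) μ) :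
    MemLp f 2 μ := by
  refine (memLp_of_integrable_abs_rpow (by linarith) hf hint).mono_exponent ?_
  rw [← ENNReal.ofReal_ofNat]
  exact ENNReal.ofReal_le_ofReal (by linarith)

lemma IsMartingaleDifference.integrable_abs_partialSum_condVar_sub_one_rpow [IsFiniteMeasure μ]
    {q : ℕ → Ω → ℝ} (h : IsMartingaleDifference μ ℱ X q) (hp : 1 ≤ p)
    (hX : ∀ i < n, Integrable (fun ω ↦ |X i ω| ^ (2 * p)) μ) :
    Integrable (fun ω ↦ |partialSum q n ω - 1| ^ p) μ := by
  have hp0 : 0 < p := by linarith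
  have hq (i : ℕ) (hi : i ∈ range n) : MemLp (q i) (ENNReal.ofReal p) μ :=
    memLp_of_integrable_abs_rpow hp0 (h.measurable_condVar' i).aestronglyMeasurable <| by
      simpa only [abs_of_nonneg (h.condVar_nonneg i _)] using
        h.integrable_condVar_rpow hp (hX i (mem_range.1 hi))
  have hsum : MemLp (fun ω ↦ partialSum q n ω - 1) (ENNReal.ofReal p) μ :=
    (memLp_finsetSum _ hq).sub (memLp_const 1)
  simpa only [ENNReal.toReal_ofReal hp0.le, Real.norm_eq_abs] using
    hsum.integrable_norm_rpow (by simpa using hp0) ENNReal.ofReal_ne_top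

/-- The differences `X 1, …, X n`, moved to the indices `0, …, n - 1` and continued by `0`. -/
def shiftedDiff (n : ℕ) (X : ℕ → Ω → ℝ) (i : ℕ) : Ω → ℝ := if i < n then X (i + 1) else 0

lemma shiftedDiff_of_lt (hi : i < n) : shiftedDiff n X i = X (i + 1) := if_pos hi

lemma sum_range_shiftedDiff (F : ℕ → (Ω → ℝ) → ℝ) :
    ∑ i ∈ range n, F i (shiftedDiff n X i) = ∑ i ∈ Icc 1 n, F (i - 1) (X i) := by
  rw [← Ico_add_one_right_eq_Icc, ← sum_Ico_add' (fun i ↦ F (i - 1) (X i)) 0 n 1, range_eq_Ico]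
  exact sum_congr rfl fun i hi ↦ by
    rw [shiftedDiff_of_lt (mem_Ico.1 hi).2, Nat.add_sub_cancel]

lemma isMartingaleDifference_shiftedDiff [IsFiniteMeasure μ] (hp : 1 ≤ p)
    (hX : ∀ i ∈ Icc 1 n, StronglyMeasurable[ℱ i] (X i))
    (hmart : ∀ i ∈ Icc 1 n, μ[X i | ℱ (i - 1)] =ᵐ[μ] (0 : Ω → ℝ))
    (hint : ∀ i ∈ Icc 1 n, Integrable (fun ω ↦ |X i ω| ^ (2 * p)) μ) :
    IsMartingaleDifference μ ℱ (shiftedDiff n X) (nonnegCondVar μ ℱ (shiftedDiff n X)) := by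
  have hmem {i : ℕ} (hi : i < n) : i + 1 ∈ Icc 1 n := mem_Icc.2 ⟨by lia, hi⟩
  refine isMartingaleDifference_nonnegCondVar (fun i ↦ ?_) (fun i ↦ ?_) (fun i ↦ ?_) <;>
    by_cases hi : i < n <;> simp only [shiftedDiff, hi, if_true, if_false]
  · exact (hX _ (hmem hi)).measurable
  · exact measurable_const
  · exact memLp_two_of_integrable_abs_rpow hp
      ((hX _ (hmem hi)).mono (ℱ.le _)).aestronglyMeasurable (hint _ (hmem hi))
  · exact MemLp.zero
  · exact hmart _ (hmem hi)
  · exact condExp_zero.eventuallyEq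

lemma partialSum_shiftedDiff (ω : Ω) :
    partialSum (shiftedDiff n X) n ω = ∑ i ∈ Icc 1 n, X i ω :=
  sum_range_shiftedDiff fun _ Y ↦ Y ω

lemma partialSum_shiftedDiff_sq (ω : Ω) :
    partialSum (fun i ω ↦ shiftedDiff n X i ω ^ 2) n ω = ∑ i ∈ Icc 1 n, X i ω ^ 2 :=
  sum_range_shiftedDiff fun _ Y ↦ Y ω ^ 2

lemma partialSum_nonnegCondVar_shiftedDiff_ae_eq :
    ∀ᵐ ω ∂μ, partialSum (nonnegCondVar μ ℱ (shiftedDiff n X)) n ω =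
      ∑ i ∈ Icc 1 n, (μ[fun ω ↦ X i ω ^ 2 | ℱ (i - 1)]) ω := by
  filter_upwards [ae_all_iff.2 fun i ↦
    condExp_sq_ae_eq_nonnegCondVar (μ := μ) (ℱ := ℱ) (Y := shiftedDiff n X) i] with ω hω
  calc partialSum (nonnegCondVar μ ℱ (shiftedDiff n X)) n ω
      = ∑ i ∈ range n, (μ[fun ω ↦ shiftedDiff n X i ω ^ 2 | ℱ i]) ω :=
        sum_congr rfl fun i _ ↦ (hω i).symm
    _ = ∑ i ∈ Icc 1 n, (μ[fun ω ↦ X i ω ^ 2 | ℱ (i - 1)]) ω :=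
        sum_range_shiftedDiff fun i Y ↦ (μ[fun ω ↦ Y ω ^ 2 | ℱ i]) ω

end Reindexing

lemma le_mul_rpow_inv_of_forall_le_mul {A C N r : ℝ} (hr : 0 < r) (hC : 1 ≤ C) (hA : A ≤ 1)
    (hN : 0 ≤ N) (h : ∀ ε, 0 < ε → ε ≤ 1 → N ≤ ε ^ r → A ≤ C * ε) : A ≤ C * N ^ r⁻¹ := by
  have hC0 : 0 < C := by linarith
  rw [← div_le_iff₀' hC0]
  refine le_of_forall_gt_imp_ge_of_dense fun δ hδ ↦ (div_le_iff₀' hC0).2 ?_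
  have hδ0 : 0 < δ := (Real.rpow_nonneg hN _).trans_lt hδ
  rcases le_total δ 1 with hδ1 | hδ1
  · exact h δ hδ0 hδ1 ((Real.rpow_inv_le_iff_of_pos hN hδ0.le hr).1 hδ.le)
  · exact hA.trans (one_le_mul_of_one_le_of_one_le hC hδ1)

lemma exists_stdNormalCDF_sub_le_measureReal_sum_Icc {p : ℝ} (hp : 1 ≤ p) :
    ∃ C : ℝ, 1 ≤ C ∧ ∀ {Ω : Type*} {mΩ : MeasurableSpace Ω} {μ : Measure Ω}
      [IsProbabilityMeasure μ] {ℱ : Filtration ℕ mΩ} {n : ℕ} {X : ℕ → Ω → ℝ} {CV : Ω → ℝ}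
      {ε t₁ t₂ x : ℝ},
      (∀ i ∈ Icc 1 n, StronglyMeasurable[ℱ i] (X i)) →
      (∀ i ∈ Icc 1 n, μ[X i | ℱ (i - 1)] =ᵐ[μ] (0 : Ω → ℝ)) →
      (∀ i ∈ Icc 1 n, Integrable (fun ω ↦ |X i ω| ^ (2 * p)) μ) →
      (∀ ω, CV ω = ∑ i ∈ Icc 1 n, (μ[fun ω' ↦ X i ω' ^ 2 | ℱ (i - 1)]) ω) →
      0 < ε → ε ≤ 1 →
      ∑ i ∈ Icc 1 n, ∫ ω, |X i ω| ^ (2 * p) ∂μ ≤ ε ^ (2 * p + 1) →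
      ∫ ω, |CV ω - 1| ^ p ∂μ ≤ ε ^ (2 * p + 1) →
      0 ≤ t₁ → 0 ≤ t₂ → t₁ + t₂ ≤ 1 → x ≤ 0 →
      Φ x - C * ε ≤ μ.real {ω | ∑ i ∈ Icc 1 n, X i ω ≤
        x * √(t₁ * CV ω + t₂ * ∑ i ∈ Icc 1 n, X i ω ^ 2 + (1 - t₁ - t₂))} := by
  obtain ⟨C, hC, hbound⟩ := exists_stdNormalCDF_sub_le_measureReal hp
  refine ⟨C, hC, ?_⟩
  intro Ω mΩ μ _ ℱ n X CV ε t₁ t₂ x hX hmart hint hCV hε hε1 hm hv ht₁ ht₂ ht hx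
  set Y := shiftedDiff n X
  set q := nonnegCondVar μ ℱ Y
  have hdiff : IsMartingaleDifference μ ℱ Y q := isMartingaleDifference_shiftedDiff hp hX hmart hint
  have hintY (i : ℕ) (hi : i < n) : Integrable (fun ω ↦ |Y i ω| ^ (2 * p)) μ := by
    simpa only [Y, shiftedDiff_of_lt hi] using hint (i + 1) (mem_Icc.2 ⟨by lia, hi⟩)
  have hmoment : ∑ i ∈ range n, ∫ ω, |Y i ω| ^ (2 * p) ∂μ =
      ∑ i ∈ Icc 1 n, ∫ ω, |X i ω| ^ (2 * p) ∂μ :=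
    sum_range_shiftedDiff fun _ Z ↦ ∫ ω, |Z ω| ^ (2 * p) ∂μ
  have hCVq : partialSum q n =ᵐ[μ] CV :=
    partialSum_nonnegCondVar_shiftedDiff_ae_eq.mono fun ω hω ↦ hω.trans (hCV ω).symm
  have hvar : ∫ ω, |partialSum q n ω - 1| ^ p ∂μ = ∫ ω, |CV ω - 1| ^ p ∂μ :=
    integral_congr_ae (hCVq.mono fun ω hω ↦ by simp only [hω])
  refine (hbound hdiff hε hε1 hintY (hdiff.integrable_abs_partialSum_condVar_sub_one_rpow hp hintY)
    (hmoment.trans_le hm) (hvar.trans_le hv) ht₁ ht₂ ht hx).trans_eq ?_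
  refine measureReal_congr (eventuallyEq_set.2 (hCVq.mono fun ω hω ↦ ?_))
  simp only [Set.mem_ofPred_eq, hω, Y, partialSum_shiftedDiff, partialSum_shiftedDiff_sq]

theorem stmt5_general {p : ℝ} (hp : 1 ≤ p) :
    ∃ C : ℝ, 0 < C ∧ ∀ {Ω : Type*} {mΩ : MeasurableSpace Ω} {μ : Measure Ω}
      [IsProbabilityMeasure μ] {ℱ : Filtration ℕ mΩ} {n : ℕ} {X : ℕ → Ω → ℝ},
      (∀ i ∈ Icc 1 n, StronglyMeasurable[ℱ i] (X i)) →
      (∀ i ∈ Icc 1 n, μ[X i | ℱ (i - 1)] =ᵐ[μ] (0 : Ω → ℝ)) →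
      (∀ i ∈ Icc 1 n, Integrable (fun ω ↦ |X i ω| ^ (2 * p)) μ) →
      ∀ {S QV CV : Ω → ℝ}, (∀ ω, S ω = ∑ i ∈ Icc 1 n, X i ω) →
      (∀ ω, QV ω = ∑ i ∈ Icc 1 n, X i ω ^ 2) →
      (∀ ω, CV ω = ∑ i ∈ Icc 1 n, (μ[fun ω' ↦ X i ω' ^ 2 | ℱ (i - 1)]) ω) →
      ∀ {N : ℝ}, N = ∑ i ∈ Icc 1 n, ∫ ω, |X i ω| ^ (2 * p) ∂μ + ∫ ω, |CV ω - 1| ^ p ∂μ →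
      ∀ {t₁ t₂ x : ℝ}, 0 ≤ t₁ → 0 ≤ t₂ → t₁ + t₂ ≤ 1 → x ≤ 0 →
      μ.real {ω | S ω ≤ x * √(t₁ * CV ω + t₂ * QV ω + (1 - t₁ - t₂))} - Φ x
        ≥ -(C * N ^ (1 / (2 * p + 1))) := by
  obtain ⟨C, hC, hbound⟩ := exists_stdNormalCDF_sub_le_measureReal_sum_Icc hp
  refine ⟨C, by linarith, ?_⟩
  intro Ω mΩ μ _ ℱ n X hX hmart hint S QV CV hS hQV hCV N hN t₁ t₂ x ht₁ ht₂ ht hx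
  have hmoment : 0 ≤ ∑ i ∈ Icc 1 n, ∫ ω, |X i ω| ^ (2 * p) ∂μ :=
    sum_nonneg fun i _ ↦ integral_nonneg fun ω ↦ by positivity
  have hvar : 0 ≤ ∫ ω, |CV ω - 1| ^ p ∂μ := integral_nonneg fun ω ↦ by positivity
  rw [one_div, ge_iff_le, neg_le, neg_sub]
  refine le_mul_rpow_inv_of_forall_le_mul (by linarith) hC
    ((sub_le_self _ measureReal_nonneg).trans (stdNormalCDF_le_one x)) (by linarith)
    fun ε hε hε1 hNε ↦ sub_le_comm.1 ?_
  simp only [hS, hQV]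
  exact hbound hX hmart hint hCV hε hε1 (by linarith) (by linarith) ht₁ ht₂ ht hx

theorem stmt5 (p : ℝ) (hp : 1 < p) :
    ∃ C : ℝ, 0 < C ∧
      ∀ (Ω : Type) (mΩ : MeasurableSpace Ω) (μ : Measure Ω),
        IsProbabilityMeasure μ →
        ∀ (ℱ : Filtration ℕ mΩ), ℱ 0 = ⊥ →
        ∀ (n : ℕ) (X : ℕ → Ω → ℝ), X 0 = 0 →
        (∀ i, StronglyMeasurable[ℱ i] (X i)) →
        (∀ i, Integrable (X i) μ) →
        (∀ i ∈ Finset.Icc 1 n, μ[X i | ℱ (i - 1)] =ᵐ[μ] (0 : Ω → ℝ)) →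
        ∀ (S : ℕ → Ω → ℝ), (∀ k ω, S k ω = ∑ i ∈ Finset.Icc 1 k, X i ω) →
        ∀ (QV CV : Ω → ℝ),
          (∀ ω, QV ω = ∑ i ∈ Finset.Icc 1 n, (X i ω) ^ 2) →
          (∀ ω, CV ω = ∑ i ∈ Finset.Icc 1 n, (μ[fun ω' => (X i ω') ^ 2 | ℱ (i - 1)]) ω) →
        (∫ ω, (S n ω) ^ 2 ∂μ) = 1 →
        (∀ i ∈ Finset.Icc 1 n, Integrable (fun ω => |X i ω| ^ (2 * p)) μ) →
        ∀ (N : ℝ),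
          N = (∑ i ∈ Finset.Icc 1 n, ∫ ω, |X i ω| ^ (2 * p) ∂μ) + (∫ ω, |CV ω - 1| ^ p ∂μ) →
      N ≤ 1 →
      ∀ t1 t2 : ℝ, 0 ≤ t1 → 0 ≤ t2 → t1 ≤ 1 → t2 ≤ 1 → t1 + t2 ≤ 1 →
      ∀ x : ℝ, x ≤ 0 →
        (μ {ω | S n ω ≤ x * Real.sqrt (t1 * CV ω + t2 * QV ω + (1 - t1 - t2))}).toReal
          - stdNormalCDF x ≥ -(C * N ^ (1 / (2 * p + 1))) := by
  obtain ⟨C, hC0, hC⟩ := stmt5_general hp.le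
  exact ⟨C, hC0, fun Ω mΩ μ _ ℱ _ n X _ hX _ hmart S hS QV CV hQV hCV _ hint N hN _ t1 t2 ht1 ht2
    _ _ ht x hx ↦ hC (fun i _ ↦ hX i) hmart hint (hS n) hQV hCV hN ht1 ht2 ht hx⟩
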